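/- arXiv:1802.08964 — 3 statements merged into one kernel-verified Lean document; each statement's English description precedes it below -/
import Mathlib

section
/- Let Q, N ≥ 1 be real numbers and let (a_n)_{n∈ℤ[i]} be any sequence of complex numbers. Then for every ε > 0 there is a constant C(ε) > 0, depending only on ε, such that ∑_{q∈ℤ[i]\{0}, N(q)≤Q} ∑_{r mod q², (r,q)=1} |∑_{n∈ℤ[i], N(n)≤N} a_n · e(Re(n r / q²))|² ≤ C(ε) · (QN)^ε · (Q³ + Q²√N + √Q · N) · ∑_{n∈ℤ[i], N(n)≤N} |a_n|². -/
noncomputable section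

/-- `e(t) = exp(2πit)`. -/
def e (t : ℝ) : ℂ := Complex.exp (2 * Real.pi * Complex.I * t)

/-- The norm of a Gaussian integer, as a real number. -/
def gN (z : GaussianInt) : ℝ := (z.re : ℝ) ^ 2 + (z.im : ℝ) ^ 2

lemma pert {ι : Type*} (S : Finset ι) (f : ι → ℂ) (t : ι → ℝ) (ht : ∀ n ∈ S, |t n| ≤ 1)
    (b c : ℝ) (hb : |b| ≤ c) :
    Summable (fun k : ℕ => c ^ k / (k.factorial : ℝ) * ‖∑ n ∈ S, f n * (t n : ℂ) ^ k‖ ^ 2) ∧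
    ‖∑ n ∈ S, f n * Complex.exp (Complex.I * b * t n)‖ ^ 2 ≤
      Real.exp c * ∑' k : ℕ, c ^ k / (k.factorial : ℝ) * ‖∑ n ∈ S, f n * (t n : ℂ) ^ k‖ ^ 2 := by
  have hc : 0 ≤ c := (abs_nonneg b).trans hb
  set X : ℕ → ℝ := fun k => ‖∑ n ∈ S, f n * (t n : ℂ) ^ k‖ with hX
  set B : ℝ := ∑ n ∈ S, ‖f n‖ with hB
  have hX0 : ∀ k, 0 ≤ X k := fun k => norm_nonneg _
  have hXB : ∀ k, X k ≤ B := by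
    intro k
    refine (norm_sum_le _ _).trans (Finset.sum_le_sum fun n hn => ?_)
    rw [norm_mul, norm_pow, Complex.norm_real, Real.norm_eq_abs]
    exact mul_le_of_le_one_right (norm_nonneg _) (pow_le_one₀ (abs_nonneg _) (ht n hn))
  have hw0 : ∀ k : ℕ, 0 ≤ c ^ k / (k.factorial : ℝ) := fun k => by positivity
  have hW : HasSum (fun k : ℕ => c ^ k / (k.factorial : ℝ)) (Real.exp c) := by
    rw [Real.exp_eq_exp_ℝ]
    exact NormedSpace.expSeries_div_hasSum_exp c
  have hY : Summable (fun k : ℕ => c ^ k / (k.factorial : ℝ) * X k) :=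
    Summable.of_nonneg_of_le (fun k => mul_nonneg (hw0 k) (hX0 k))
      (fun k => mul_le_mul_of_nonneg_left (hXB k) (hw0 k)) (hW.summable.mul_right B)
  have hZ : Summable (fun k : ℕ => c ^ k / (k.factorial : ℝ) * X k ^ 2) :=
    Summable.of_nonneg_of_le (fun k => mul_nonneg (hw0 k) (sq_nonneg _))
      (fun k => mul_le_mul_of_nonneg_left (pow_le_pow_left₀ (hX0 k) (hXB k) 2) (hw0 k))
      (hW.summable.mul_right (B ^ 2))
  refine ⟨hZ, ?_⟩
  have hs : HasSum (fun k : ℕ => ∑ n ∈ S, f n * ((Complex.I * b * t n) ^ k / (k.factorial : ℂ)))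
      (∑ n ∈ S, f n * Complex.exp (Complex.I * b * t n)) := by
    refine hasSum_sum fun n _ => HasSum.mul_left _ ?_
    rw [Complex.exp_eq_exp_ℂ]
    exact NormedSpace.expSeries_div_hasSum_exp _
  have hterm : ∀ k : ℕ, ‖∑ n ∈ S, f n * ((Complex.I * b * t n) ^ k / (k.factorial : ℂ))‖
      ≤ c ^ k / (k.factorial : ℝ) * X k := by
    intro k
    have : ∑ n ∈ S, f n * ((Complex.I * b * t n) ^ k / (k.factorial : ℂ))
        = ((Complex.I * b) ^ k / (k.factorial : ℂ)) * ∑ n ∈ S, f n * (t n : ℂ) ^ k := by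
      rw [Finset.mul_sum]
      refine Finset.sum_congr rfl fun n _ => ?_
      rw [mul_pow]; ring
    rw [this, norm_mul]
    refine mul_le_mul_of_nonneg_right ?_ (hX0 k)
    rw [norm_div, norm_pow, norm_mul, Complex.norm_I, one_mul, Complex.norm_real,
      Real.norm_eq_abs, Complex.norm_natCast]
    gcongr
  have hle : ‖∑ n ∈ S, f n * Complex.exp (Complex.I * b * t n)‖
      ≤ ∑' k : ℕ, c ^ k / (k.factorial : ℝ) * X k := by
    rw [← hs.tsum_eq]
    exact tsum_of_norm_bounded hY.hasSum hterm
  set Y := ∑' k : ℕ, c ^ k / (k.factorial : ℝ) * X k with hYd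
  set Z := ∑' k : ℕ, c ^ k / (k.factorial : ℝ) * X k ^ 2 with hZd
  have key : ∀ s : ℝ, 2 * s * Y ≤ s ^ 2 * Real.exp c + Z := by
    intro s
    have h1 : HasSum (fun k : ℕ => 2 * s * (c ^ k / (k.factorial : ℝ) * X k)) (2 * s * Y) :=
      hY.hasSum.mul_left _
    have h2 : HasSum (fun k : ℕ => s ^ 2 * (c ^ k / (k.factorial : ℝ))
        + c ^ k / (k.factorial : ℝ) * X k ^ 2) (s ^ 2 * Real.exp c + Z) :=
      (hW.mul_left _).add hZ.hasSum
    refine hasSum_le (fun k => ?_) h1 h2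
    nlinarith [mul_nonneg (hw0 k) (sq_nonneg (s - X k))]
  have hE := Real.exp_pos c
  have h := key (Y / Real.exp c)
  have h3 : Y ^ 2 ≤ Real.exp c * Z := by
    have e1 : 2 * (Y / Real.exp c) * Y = 2 * (Y ^ 2 / Real.exp c) := by ring
    have e2 : (Y / Real.exp c) ^ 2 * Real.exp c = Y ^ 2 / Real.exp c := by field_simp
    rw [e1, e2] at h
    have : Y ^ 2 / Real.exp c ≤ Z := by linarith
    rwa [div_le_iff₀ hE, mul_comm] at this
  exact (pow_le_pow_left₀ (norm_nonneg _) hle 2).trans h3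

lemma pertSum {ι κ : Type*} (J : Finset κ) (S : Finset ι) (f : κ → ι → ℂ) (t : ι → ℝ)
    (ht : ∀ n ∈ S, |t n| ≤ 1)
    (b : κ → ℝ) (c : ℝ) (hb : ∀ j ∈ J, |b j| ≤ c) (hc : 0 ≤ c) (D : ℝ)
    (h : ∀ k : ℕ, ∑ j ∈ J, ‖∑ n ∈ S, f j n * (t n : ℂ) ^ k‖ ^ 2 ≤ D) :
    ∑ j ∈ J, ‖∑ n ∈ S, f j n * Complex.exp (Complex.I * b j * t n)‖ ^ 2
      ≤ Real.exp c ^ 2 * D := by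
  have hW : HasSum (fun k : ℕ => c ^ k / (k.factorial : ℝ)) (Real.exp c) := by
    rw [Real.exp_eq_exp_ℝ]
    exact NormedSpace.expSeries_div_hasSum_exp c
  have hsum : ∀ j ∈ J, Summable (fun k : ℕ => c ^ k / (k.factorial : ℝ) *
      ‖∑ n ∈ S, f j n * (t n : ℂ) ^ k‖ ^ 2) := fun j hj => (pert S (f j) t ht (b j) c (hb j hj)).1
  calc _ ≤ ∑ j ∈ J, Real.exp c * ∑' k : ℕ, c ^ k / (k.factorial : ℝ) *
          ‖∑ n ∈ S, f j n * (t n : ℂ) ^ k‖ ^ 2 :=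
        Finset.sum_le_sum fun j hj => (pert S (f j) t ht (b j) c (hb j hj)).2
    _ = Real.exp c * ∑' k : ℕ, c ^ k / (k.factorial : ℝ) *
          ∑ j ∈ J, ‖∑ n ∈ S, f j n * (t n : ℂ) ^ k‖ ^ 2 := by
        rw [← Finset.mul_sum, ← Summable.tsum_finsetSum hsum]
        simp_rw [Finset.mul_sum]
    _ ≤ Real.exp c * (Real.exp c * D) := by
        refine mul_le_mul_of_nonneg_left ?_ (Real.exp_pos c).le
        rw [← (hW.mul_right D).tsum_eq]
        refine Summable.tsum_le_tsum (fun k => mul_le_mul_of_nonneg_left (h k) (by positivity)) ?_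
          (hW.summable.mul_right D)
        have := summable_sum hsum
        simpa [Finset.mul_sum] using this
    _ = _ := by ring

lemma e_add (x y : ℝ) : e (x + y) = e x * e y := by
  simp only [e]; rw [← Complex.exp_add]; push_cast; ring_nf

lemma e_int (k : ℤ) : e k = 1 := by
  simp only [e]
  rw [Complex.exp_eq_one_iff]
  exact ⟨k, by push_cast; ring⟩

lemma e_conj (x : ℝ) : (starRingEnd ℂ) (e x) = e (-x) := by
  simp only [e]
  rw [← Complex.exp_conj]
  have h2 : (starRingEnd ℂ) 2 = 2 := map_ofNat _ 2
  simp [h2]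

lemma e_pow (x : ℝ) (g : ℕ) : e (x * g) = e x ^ g := by
  simp only [e]; rw [← Complex.exp_nat_mul]; push_cast; ring_nf

lemma e_eq_one {x : ℝ} (h : e x = 1) : ∃ k : ℤ, x = k := by
  simp only [e] at h
  rw [Complex.exp_eq_one_iff] at h
  obtain ⟨k, hk⟩ := h
  refine ⟨k, ?_⟩
  have h2 : (2 * Real.pi * Complex.I : ℂ) ≠ 0 := Complex.two_pi_I_ne_zero
  have : (x : ℂ) = (k : ℂ) := mul_left_cancel₀ h2 (by rw [hk]; ring)
  exact_mod_cast this

lemma orth (M : ℕ) (hM : 0 < M) (k : ℤ) (hk : |k| < M) :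
    ∑ g ∈ Finset.range M, e ((k : ℝ) * g / M) = if k = 0 then (M : ℂ) else 0 := by
  have hM' : (M : ℝ) ≠ 0 := by positivity
  have : ∀ g : ℕ, e ((k : ℝ) * g / M) = e ((k : ℝ) / M) ^ g := by
    intro g; rw [← e_pow]; ring_nf
  simp_rw [this]
  split_ifs with h
  · subst h
    have : e ((0 : ℤ) / M) = 1 := by have := e_int 0; simpa using this
    simp only [this]; simp
  · have hne : e ((k : ℝ) / M) ≠ 1 := by
      intro h1
      obtain ⟨l, hl⟩ := e_eq_one h1
      rw [div_eq_iff hM'] at hl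
      have hl' : k = l * M := by exact_mod_cast hl
      rcases eq_or_ne l 0 with h0 | h0
      · simp [h0] at hl'; exact h hl'
      · have : (1 : ℤ) ≤ |l| := Int.one_le_abs h0
        rw [hl', abs_mul, Nat.abs_cast] at hk
        nlinarith
    rw [geom_sum_eq hne, ← e_pow, div_mul_cancel₀ _ hM', e_int]
    simp

lemma parseval (M : ℕ) (hM : 0 < M) (S : Finset GaussianInt)
    (hS : ∀ n ∈ S, ∀ m ∈ S, |n.re - m.re| < M ∧ |n.im - m.im| < M) (b : GaussianInt → ℂ) :
    ∑ g ∈ Finset.range M ×ˢ Finset.range M,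
      ‖∑ n ∈ S, b n * e (((n.re : ℝ) * g.1 / M) + ((n.im : ℝ) * g.2 / M))‖ ^ 2
      = (M : ℝ) ^ 2 * ∑ n ∈ S, ‖b n‖ ^ 2 := by
  have key : ((∑ g ∈ Finset.range M ×ˢ Finset.range M,
      ‖∑ n ∈ S, b n * e (((n.re : ℝ) * g.1 / M) + ((n.im : ℝ) * g.2 / M))‖ ^ 2 : ℝ) : ℂ)
      = (((M : ℝ) ^ 2 * ∑ n ∈ S, ‖b n‖ ^ 2 : ℝ) : ℂ) := by
    push_cast
    calc _ = ∑ g ∈ Finset.range M ×ˢ Finset.range M, ∑ n ∈ S, ∑ m ∈ S,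
          (b n * (starRingEnd ℂ) (b m)) * (e (((n.re - m.re : ℤ) : ℝ) * g.1 / M) *
            e (((n.im - m.im : ℤ) : ℝ) * g.2 / M)) := by
          refine Finset.sum_congr rfl fun g _ => ?_
          rw [← Complex.mul_conj', map_sum, Finset.sum_mul_sum]
          refine Finset.sum_congr rfl fun n _ => Finset.sum_congr rfl fun m _ => ?_
          rw [map_mul, e_conj, ← e_add]
          have : e (((n.re - m.re : ℤ) : ℝ) * g.1 / M + ((n.im - m.im : ℤ) : ℝ) * g.2 / M)
            = e ((n.re : ℝ) * g.1 / M + (n.im : ℝ) * g.2 / M) *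
              e (-((m.re : ℝ) * g.1 / M + (m.im : ℝ) * g.2 / M)) := by
            rw [← e_add]; push_cast; ring_nf
          rw [this]; ring
      _ = ∑ n ∈ S, ∑ m ∈ S, (b n * (starRingEnd ℂ) (b m)) *
            ∑ g ∈ Finset.range M ×ˢ Finset.range M, (e (((n.re - m.re : ℤ) : ℝ) * g.1 / M) *
            e (((n.im - m.im : ℤ) : ℝ) * g.2 / M)) := by
          rw [Finset.sum_comm]
          refine Finset.sum_congr rfl fun n _ => ?_
          rw [Finset.sum_comm]
          refine Finset.sum_congr rfl fun m _ => ?_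
          rw [Finset.mul_sum]
      _ = ∑ n ∈ S, ∑ m ∈ S, (b n * (starRingEnd ℂ) (b m)) *
            (if n = m then (M : ℂ) ^ 2 else 0) := by
          refine Finset.sum_congr rfl fun n hn => Finset.sum_congr rfl fun m hm => ?_
          congr 1
          rw [Finset.sum_product]
          dsimp only
          rw [← Finset.sum_mul_sum, orth M hM _ (hS n hn m hm).1,
            orth M hM _ (hS n hn m hm).2]
          by_cases h : n = m
          · simp [h, sq]
          · rw [if_neg h]
            by_cases h1 : n.re - m.re = 0
            · have h2 : n.im - m.im ≠ 0 := by
                intro h2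
                exact h (Zsqrtd.ext (by lia) (by lia))
              rw [if_neg h2, mul_zero]
            · rw [if_neg h1, zero_mul]
      _ = _ := by
          rw [Finset.mul_sum]
          refine Finset.sum_congr rfl fun n hn => ?_
          simp only [mul_ite, mul_zero, Finset.sum_ite_eq, hn, if_true]
          rw [← Complex.mul_conj']; ring
  exact_mod_cast key

lemma largeSieve {κ : Type*} (J : Finset κ) (S : Finset GaussianInt) (L M : ℕ) (hL : 0 < L)
    (hM : M = 2 * L + 1) (hS : ∀ n ∈ S, |n.re| ≤ L ∧ |n.im| ≤ L) (a : GaussianInt → ℂ)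
    (al : κ → ℂ) (K : ℝ) (hK : ∀ j₀ ∈ J, ∀ J' ⊆ J,
      (∀ j ∈ J', ∃ z : GaussianInt, |(al j - al j₀ - z).re| ≤ 1 / M ∧
        |(al j - al j₀ - z).im| ≤ 1 / M) → (J'.card : ℝ) ≤ K) (hK0 : 0 ≤ K) :
    ∑ j ∈ J, ‖∑ n ∈ S, a n * e (((n : ℂ) * al j).re)‖ ^ 2
      ≤ Real.exp 2 ^ 4 * (K * (M : ℝ) ^ 2) * ∑ n ∈ S, ‖a n‖ ^ 2 := by
  classical
  have hM0 : 0 < M := by lia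
  have hMR : (0 : ℝ) < M := by exact_mod_cast hM0
  have hMne : (M : ℝ) ≠ 0 := hMR.ne'
  have hMZ : (0 : ℤ) < M := by exact_mod_cast hM0
  have hLR : (0 : ℝ) < L := by exact_mod_cast hL
  set g : ℝ → ℕ := fun x => (round (M * x) % (M : ℤ)).toNat with hg
  have hgcast : ∀ x, ((g x : ℕ) : ℤ) = round (M * x) % (M : ℤ) := fun x =>
    Int.toNat_of_nonneg (Int.emod_nonneg _ hMZ.ne')
  have hglt : ∀ x, g x < M := by
    intro x
    have := Int.emod_lt_of_pos (round (M * x)) hMZ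
    have h2 := hgcast x
    lia
  set be : ℝ → ℝ := fun x => x - round (M * x) / M with hbe
  have hbe' : ∀ x, |be x| ≤ 1 / (2 * M) := by
    intro x
    have h1 := abs_sub_round (M * x)
    have : be x = (M * x - round (M * x)) / M := by simp only [hbe]; field_simp
    rw [this, abs_div, abs_of_pos hMR, div_le_div_iff₀ hMR (by positivity)]
    nlinarith
  have hdec : ∀ x, ∃ z : ℤ, x = g x / M + be x + z := by
    intro x
    refine ⟨round (M * x) / (M : ℤ), ?_⟩
    have h1 := Int.emod_add_mul_ediv (round (M * x)) M
    rw [← hgcast] at h1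
    have h2 : (g x : ℝ) + M * ((round (M * x) / (M : ℤ) : ℤ) : ℝ) = round (M * x) := by
      exact_mod_cast h1
    simp only [hbe]
    rw [← h2]; field_simp; ring
  set G : κ → ℕ × ℕ := fun j => (g (al j).re, g (-(al j).im)) with hG
  -- fibre bound
  have hfib : ∀ p : ℕ × ℕ, ((J.filter fun j => G j = p).card : ℝ) ≤ K := by
    intro p
    by_cases hne : (J.filter fun j => G j = p).Nonempty
    · obtain ⟨j₀, hj₀⟩ := hne
      rw [Finset.mem_filter] at hj₀
      refine hK j₀ hj₀.1 _ (Finset.filter_subset _ _) ?_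
      intro j hj
      rw [Finset.mem_filter] at hj
      have h1 : G j = G j₀ := hj.2.trans hj₀.2.symm
      simp only [hG, Prod.mk.injEq] at h1
      obtain ⟨z1, hz1⟩ := hdec (al j).re
      obtain ⟨z2, hz2⟩ := hdec (al j₀).re
      obtain ⟨w1, hw1⟩ := hdec (-(al j).im)
      obtain ⟨w2, hw2⟩ := hdec (-(al j₀).im)
      rw [h1.1] at hz1
      rw [h1.2] at hw1
      refine ⟨⟨z1 - z2, w2 - w1⟩, ?_, ?_⟩
      · have : (al j - al j₀ - ((⟨z1 - z2, w2 - w1⟩ : GaussianInt) : ℂ)).re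
            = be (al j).re - be (al j₀).re := by
          simp [GaussianInt.toComplex_def]; linarith
        rw [this]
        refine (abs_sub _ _).trans ?_
        have e1 := hbe' (al j).re
        have e2 := hbe' (al j₀).re
        have : (1 : ℝ) / M = 1 / (2 * M) + 1 / (2 * M) := by field_simp; norm_num
        linarith
      · have : (al j - al j₀ - ((⟨z1 - z2, w2 - w1⟩ : GaussianInt) : ℂ)).im
            = be (-(al j₀).im) - be (-(al j).im) := by
          simp [GaussianInt.toComplex_def]; linarith
        rw [this]
        refine (abs_sub _ _).trans ?_
        have e1 := hbe' (-(al j).im)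
        have e2 := hbe' (-(al j₀).im)
        have : (1 : ℝ) / M = 1 / (2 * M) + 1 / (2 * M) := by field_simp; norm_num
        linarith
    · rw [Finset.not_nonempty_iff_eq_empty] at hne
      rw [hne]; simpa using hK0
  set E : GaussianInt → ℕ × ℕ → ℂ := fun n p =>
    e (((n.re : ℝ) * p.1 / M) + ((n.im : ℝ) * p.2 / M)) with hE
  have base : ∀ b : GaussianInt → ℂ, ∑ j ∈ J, ‖∑ n ∈ S, b n * E n (G j)‖ ^ 2
      ≤ K * (M : ℝ) ^ 2 * ∑ n ∈ S, ‖b n‖ ^ 2 := by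
    intro b
    have hmaps : ∀ j ∈ J, G j ∈ Finset.range M ×ˢ Finset.range M := by
      intro j _
      simp [hG, hglt]
    rw [← Finset.sum_fiberwise_of_maps_to hmaps]
    calc _ ≤ ∑ p ∈ Finset.range M ×ˢ Finset.range M, K * ‖∑ n ∈ S, b n * E n p‖ ^ 2 := by
          refine Finset.sum_le_sum fun p _ => ?_
          have : ∑ j ∈ J with G j = p, ‖∑ n ∈ S, b n * E n (G j)‖ ^ 2
              = ∑ j ∈ J with G j = p, ‖∑ n ∈ S, b n * E n p‖ ^ 2 := by
            refine Finset.sum_congr rfl fun j hj => ?_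
            rw [(Finset.mem_filter.mp hj).2]
          rw [this, Finset.sum_const, nsmul_eq_mul]
          exact mul_le_mul_of_nonneg_right (hfib p) (sq_nonneg _)
      _ = _ := by
          rw [← Finset.mul_sum, parseval M hM0 S ?_ b]
          · ring
          · intro n hn m hm
            have h1 := hS n hn
            have h2 := hS m hm
            simp only [abs_le, abs_lt] at *
            lia
  set t1 : GaussianInt → ℝ := fun n => n.re / L
  set t2 : GaussianInt → ℝ := fun n => n.im / L
  have habs : ∀ k : ℤ, |k| ≤ L → |(k : ℝ) / L| ≤ 1 := by
    intro k hk
    rw [abs_div, abs_of_pos hLR, div_le_one hLR]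
    exact_mod_cast hk
  have ht1 : ∀ n ∈ S, |t1 n| ≤ 1 := fun n hn => habs _ (hS n hn).1
  have ht2 : ∀ n ∈ S, |t2 n| ≤ 1 := fun n hn => habs _ (hS n hn).2
  have hbb : ∀ x, |2 * Real.pi * L * be x| ≤ 2 := by
    intro x
    have h1 := hbe' x
    rw [abs_mul, abs_of_pos (by positivity : 0 < 2 * Real.pi * L)]
    have h2 : (M : ℝ) = 2 * L + 1 := by rw [hM]; push_cast; ring
    calc 2 * Real.pi * L * |be x| ≤ 2 * Real.pi * L * (1 / (2 * M)) := by gcongr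
      _ = Real.pi * L / M := by field_simp
      _ ≤ 2 := by
        rw [div_le_iff₀ hMR, h2]
        nlinarith [Real.pi_le_four]
  have hfinal : ∀ j ∈ J, ∑ n ∈ S, a n * e (((n : ℂ) * al j).re)
      = ∑ n ∈ S, (a n * E n (G j) * Complex.exp (Complex.I * (2 * Real.pi * L * be (-(al j).im) : ℝ) * t2 n))
        * Complex.exp (Complex.I * (2 * Real.pi * L * be (al j).re : ℝ) * t1 n) := by
    intro j _
    refine Finset.sum_congr rfl fun n _ => ?_
    obtain ⟨z, hz⟩ := hdec (al j).re
    obtain ⟨w, hw⟩ := hdec (-(al j).im)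
    have h1 : ((n : ℂ) * al j).re = ((n.re : ℝ) * (G j).1 / M + (n.im : ℝ) * (G j).2 / M)
        + ((n.im : ℝ) * be (-(al j).im)) + ((n.re : ℝ) * be (al j).re)
        + ((n.re * z + n.im * w : ℤ) : ℝ) := by
      have : ((n : ℂ) * al j).re = (n.re : ℝ) * (al j).re + (n.im : ℝ) * (-(al j).im) := by
        simp; ring
      rw [this]
      simp only [hG]
      push_cast
      linear_combination (n.re : ℝ) * hz + (n.im : ℝ) * hw
    rw [h1, e_add, e_int, mul_one, e_add, e_add]
    have hLc : (L : ℂ) ≠ 0 := by exact_mod_cast hL.ne'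
    have h2 : e ((n.im : ℝ) * be (-(al j).im)) = Complex.exp (Complex.I * (2 * Real.pi * L * be (-(al j).im) : ℝ) * t2 n) := by
      simp only [e, t2]; congr 1; push_cast; field_simp
    have h3 : e ((n.re : ℝ) * be (al j).re) = Complex.exp (Complex.I * (2 * Real.pi * L * be (al j).re : ℝ) * t1 n) := by
      simp only [e, t1]; congr 1; push_cast; field_simp
    rw [h2, h3]; simp only [hE]; ring
  rw [Finset.sum_congr rfl fun j hj => by rw [hfinal j hj]]
  have step := pertSum J S (fun j n => a n * E n (G j) *
    Complex.exp (Complex.I * (2 * Real.pi * L * be (-(al j).im) : ℝ) * t2 n)) t1 ht1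
    (fun j => 2 * Real.pi * L * be (al j).re) 2 (fun j _ => hbb _) (by norm_num)
    (Real.exp 2 ^ 2 * (K * (M : ℝ) ^ 2 * ∑ n ∈ S, ‖a n‖ ^ 2)) ?_
  · refine step.trans (le_of_eq ?_); ring
  intro k
  have step2 := pertSum J S (fun j n => a n * E n (G j) * (t1 n : ℂ) ^ k) t2 ht2
    (fun j => 2 * Real.pi * L * be (-(al j).im)) 2 (fun j _ => hbb _) (by norm_num)
    (K * (M : ℝ) ^ 2 * ∑ n ∈ S, ‖a n‖ ^ 2) ?_
  · refine le_trans (le_of_eq ?_) step2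
    refine Finset.sum_congr rfl fun j _ => ?_
    congr 2
    refine Finset.sum_congr rfl fun n _ => ?_
    ring
  intro l
  have := base (fun n => a n * (t1 n : ℂ) ^ k * (t2 n : ℂ) ^ l)
  refine le_trans (le_of_eq ?_) (this.trans ?_)
  · refine Finset.sum_congr rfl fun j _ => ?_
    congr 2
    refine Finset.sum_congr rfl fun n _ => ?_
    ring
  · refine mul_le_mul_of_nonneg_left ?_ (by positivity)
    refine Finset.sum_le_sum fun n hn => ?_
    refine pow_le_pow_left₀ (norm_nonneg _) ?_ 2
    rw [norm_mul, norm_mul, norm_pow, norm_pow, Complex.norm_real, Complex.norm_real,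
      Real.norm_eq_abs, Real.norm_eq_abs]
    have h1 := pow_le_one₀ (n := k) (abs_nonneg _) (ht1 n hn)
    have h2 := pow_le_one₀ (n := l) (abs_nonneg _) (ht2 n hn)
    calc _ ≤ ‖a n‖ * 1 * 1 := by gcongr
      _ = _ := by ring

lemma cnt_int (T : Finset ℤ) (x R : ℝ) (hR : 0 ≤ R) (h : ∀ z ∈ T, |(z : ℝ) - x| ≤ R) :
    (T.card : ℝ) ≤ 2 * R + 1 := by
  have hsub : T ⊆ Finset.Icc ⌈x - R⌉ ⌊x + R⌋ := by
    intro z hz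
    have := abs_le.mp (h z hz)
    rw [Finset.mem_Icc]
    exact ⟨Int.ceil_le.mpr (by linarith), Int.le_floor.mpr (by linarith)⟩
  have h1 := Finset.card_le_card hsub
  rw [Int.card_Icc] at h1
  have h2 : ((⌊x + R⌋ + 1 - ⌈x - R⌉).toNat : ℝ) ≤ 2 * R + 1 := by
    rcases le_total 0 (⌊x + R⌋ + 1 - ⌈x - R⌉) with h0 | h0
    · have : (((⌊x + R⌋ + 1 - ⌈x - R⌉).toNat : ℤ) : ℝ) = ((⌊x + R⌋ + 1 - ⌈x - R⌉ : ℤ) : ℝ) := by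
        rw [Int.toNat_of_nonneg h0]
      rw [Int.cast_natCast] at this
      rw [this]; push_cast
      have := Int.floor_le (x + R)
      have := Int.le_ceil (x - R)
      linarith
    · rw [Int.toNat_eq_zero.mpr h0]; push_cast; linarith
  exact le_trans (by exact_mod_cast h1) h2

lemma cnt (T : Finset GaussianInt) (c : ℂ) (R : ℝ) (hR : 0 ≤ R)
    (h : ∀ z ∈ T, ‖(z : ℂ) - c‖ ≤ R) : (T.card : ℝ) ≤ (2 * R + 1) ^ 2 := by
  classical
  have h1 : (T.card : ℝ) ≤ ((T.image Zsqrtd.re ×ˢ T.image Zsqrtd.im).card : ℝ) := by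
    have := Finset.card_le_card_of_injOn (s := T) (t := T.image Zsqrtd.re ×ˢ T.image Zsqrtd.im)
      (fun z => (z.re, z.im)) (fun z hz => by
        simp only [Finset.coe_product, Set.mem_prod, Finset.mem_coe]
        exact ⟨Finset.mem_image_of_mem _ hz, Finset.mem_image_of_mem _ hz⟩)
      (fun z _ w _ hzw => by
        simp only [Prod.mk.injEq] at hzw
        exact Zsqrtd.ext hzw.1 hzw.2)
    exact_mod_cast this
  rw [Finset.card_product] at h1
  push_cast at h1
  have h2 := cnt_int (T.image Zsqrtd.re) c.re R hR (by
    intro k hk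
    obtain ⟨z, hz, rfl⟩ := Finset.mem_image.mp hk
    have := (Complex.abs_re_le_norm _).trans (h z hz)
    simpa using this)
  have h3 := cnt_int (T.image Zsqrtd.im) c.im R hR (by
    intro k hk
    obtain ⟨z, hz, rfl⟩ := Finset.mem_image.mp hk
    have := (Complex.abs_im_le_norm _).trans (h z hz)
    simpa using this)
  calc _ ≤ _ := h1
    _ ≤ (2 * R + 1) * (2 * R + 1) := by gcongr
    _ = _ := by ring

lemma gN_eq (z : GaussianInt) : gN z = ‖(z : ℂ)‖ ^ 2 := by
  rw [← Complex.normSq_eq_norm_sq, Complex.normSq_apply]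
  simp [gN]; ring

lemma gN_mul (z w : GaussianInt) : gN (z * w) = gN z * gN w := by
  simp only [gN_eq, map_mul, norm_mul]; ring

lemma fin_disc (B : ℝ) : {z : GaussianInt | gN z ≤ B}.Finite := by
  have h : ((Finset.Icc (-⌈|B|⌉) ⌈|B|⌉ ×ˢ Finset.Icc (-⌈|B|⌉) ⌈|B|⌉).image
      (fun p : ℤ × ℤ => (⟨p.1, p.2⟩ : GaussianInt)) : Set GaussianInt).Finite := Finset.finite_toSet _
  refine h.subset ?_
  intro z hz
  have hz' : (z.re : ℝ) ^ 2 + (z.im : ℝ) ^ 2 ≤ B := hz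
  have hB : B ≤ ⌈|B|⌉ := (le_abs_self B).trans (Int.le_ceil _)
  have h1 : z.re ^ 2 + z.im ^ 2 ≤ ⌈|B|⌉ := by
    have := hz'.trans hB
    exact_mod_cast this
  have h2 : ∀ k : ℤ, k ≤ k ^ 2 ∧ -k ≤ k ^ 2 := by
    intro k
    constructor
    · nlinarith [Int.le_self_sq k]
    · nlinarith [Int.le_self_sq (-k)]
  have := h2 z.re
  have := h2 z.im
  have := sq_nonneg z.re
  have := sq_nonneg z.im
  simp only [Finset.coe_image, Set.mem_image, Finset.mem_coe, Finset.mem_product, Finset.mem_Icc]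
  exact ⟨(z.re, z.im), by constructor <;> constructor <;> (simp only; lia), rfl⟩

lemma gN_norm (z : GaussianInt) : gN z = (z.norm : ℝ) := by
  rw [Zsqrtd.norm_def, gN]; push_cast; ring

lemma gN_unit {z : GaussianInt} (h : IsUnit z) : gN z = 1 := by
  rw [gN_norm]
  have := Zsqrtd.norm_eq_one_iff.mpr h
  have h2 := GaussianInt.norm_nonneg z
  have : z.norm = 1 := by lia
  rw [this]; simp

lemma gN_one_le {z : GaussianInt} (h : z ≠ 0) : 1 ≤ gN z := by
  rw [gN_norm]
  have := GaussianInt.norm_pos.mpr h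
  exact_mod_cast this

lemma gN_two_le {z : GaussianInt} (h : Prime z) : 2 ≤ gN z := by
  rw [gN_norm]
  have h1 := GaussianInt.norm_pos.mpr h.ne_zero
  have h2 : z.norm.natAbs ≠ 1 := fun h3 => h.not_isUnit (Zsqrtd.norm_eq_one_iff.mp h3)
  have : 2 ≤ z.norm := by lia
  exact_mod_cast this

def gNh : GaussianInt →* ℝ where
  toFun := gN
  map_one' := gN_unit isUnit_one
  map_mul' := gN_mul

open UniqueFactorizationMonoid in
lemma divisor_bound (ε : ℝ) (hε : 0 < ε) : ∃ C : ℝ, 0 < C ∧ ∀ m : GaussianInt, m ≠ 0 →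
    ∀ T : Finset GaussianInt, (∀ d ∈ T, d ∣ m) → (T.card : ℝ) ≤ C * gN m ^ ε := by
  classical
  let _ : NormalizationMonoid GaussianInt :=
    (UniqueFactorizationMonoid.strongNormalizationMonoid (α := GaussianInt)).toNormalizationMonoid
  set U : Finset GaussianInt := (fin_disc 1).toFinset with hU
  set B : ℝ := 2 ^ (1 / ε) with hB
  set V : Finset GaussianInt := (fin_disc B).toFinset with hV
  have hl2 : 0 < Real.log 2 := Real.log_pos (by norm_num)
  set C1 : ℝ := 1 + 1 / (ε * Real.log 2) with hC1
  have hC1' : 1 ≤ C1 := by rw [hC1]; have : 0 < 1 / (ε * Real.log 2) := by positivity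
                           linarith
  have hUpos : 0 < U.card := Finset.card_pos.mpr ⟨1, by
    simp only [hU, Set.Finite.mem_toFinset, Set.mem_ofPred_eq]
    exact (gN_unit isUnit_one).le⟩
  refine ⟨U.card * C1 ^ V.card, by positivity, ?_⟩
  intro m hm T hT
  set s := normalizedFactors m with hs
  have hT0 : ∀ d ∈ T, d ≠ 0 := fun d hd h0 => hm (by have := hT d hd; rwa [h0, zero_dvd_iff] at this)
  -- fibres
  have hcard : T.card ≤ U.card * (Finset.Iic s).card := by
    refine Finset.card_le_mul_card_image_of_maps_to (f := fun d => normalizedFactors d) ?_ _ ?_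
    · intro d hd
      simp only [Finset.mem_Iic]
      exact (dvd_iff_normalizedFactors_le_normalizedFactors (hT0 d hd) hm).mp (hT d hd)
    · intro t _
      by_cases hne : (T.filter fun d => normalizedFactors d = t).Nonempty
      · obtain ⟨d0, hd0⟩ := hne
        rw [Finset.mem_filter] at hd0
        have : (T.filter fun d => normalizedFactors d = t) ⊆ U.image (fun u => d0 * u) := by
          intro d hd
          rw [Finset.mem_filter] at hd
          have a1 := prod_normalizedFactors (hT0 d0 hd0.1)
          have a2 := prod_normalizedFactors (hT0 d hd.1)
          rw [hd0.2] at a1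
          rw [hd.2] at a2
          obtain ⟨u, hu⟩ := a1.symm.trans a2
          refine Finset.mem_image.mpr ⟨u, ?_, hu⟩
          simp only [hU, Set.Finite.mem_toFinset, Set.mem_ofPred_eq]
          exact (gN_unit u.isUnit).le
        exact (Finset.card_le_card this).trans Finset.card_image_le
      · rw [Finset.not_nonempty_iff_eq_empty] at hne
        rw [hne]; simp
  rw [Multiset.card_Iic] at hcard
  have hprime : ∀ p ∈ s.toFinset, Prime p := fun p hp =>
    prime_of_normalized_factor p (Multiset.mem_toFinset.mp hp)
  have hterm : ∀ p ∈ s.toFinset, ((s.count p : ℝ) + 1) ≤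
      (if p ∈ V then C1 else 1) * (gN p ^ (s.count p)) ^ ε := by
    intro p hp
    set k := s.count p
    have hp2 := gN_two_le (hprime p hp)
    have hcomm : (gN p ^ k) ^ ε = (gN p ^ ε) ^ k := by
      rw [← Real.rpow_natCast, ← Real.rpow_mul (by linarith), ← Real.rpow_natCast,
        ← Real.rpow_mul (by linarith), mul_comm]
    rw [hcomm]
    split_ifs with hpV
    · have h1 : (2 : ℝ) ^ ε ≤ gN p ^ ε := Real.rpow_le_rpow (by norm_num) hp2 hε.le
      have h2 : 1 + k * (ε * Real.log 2) ≤ ((2 : ℝ) ^ ε) ^ k := by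
        rw [← Real.rpow_natCast, ← Real.rpow_mul (by norm_num), Real.rpow_def_of_pos (by norm_num)]
        have := Real.add_one_le_exp (Real.log 2 * (ε * k))
        linarith
      have h3 : ((2 : ℝ) ^ ε) ^ k ≤ (gN p ^ ε) ^ k := by gcongr
      have h4 : C1 * (1 + k * (ε * Real.log 2)) = C1 + k * (ε * Real.log 2 + 1) := by
        rw [hC1]; field_simp
      have h5 : 0 ≤ k * (ε * Real.log 2) := by positivity
      calc (k : ℝ) + 1 ≤ C1 * (1 + k * (ε * Real.log 2)) := by rw [h4]; nlinarith
        _ ≤ _ := by gcongr; exact h2.trans h3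
    · have hpB : B ≤ gN p := by
        simp only [hV, Set.Finite.mem_toFinset, Set.mem_ofPred_eq, not_le] at hpV
        exact hpV.le
      have h1 : (2 : ℝ) ≤ gN p ^ ε := by
        have : B ^ ε = 2 := by
          rw [hB, ← Real.rpow_mul (by norm_num), one_div_mul_cancel hε.ne', Real.rpow_one]
        rw [← this]
        exact Real.rpow_le_rpow (by positivity) hpB hε.le
      have h2 : ((k : ℝ) + 1) ≤ 2 ^ k := by
        have := Nat.lt_two_pow_self (n := k)
        exact_mod_cast this
      rw [one_mul]
      exact h2.trans (by gcongr)
  have hgm : gN m = ∏ p ∈ s.toFinset, gN p ^ s.count p := by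
    obtain ⟨u, hu⟩ := prod_normalizedFactors hm
    rw [← hu, gN_mul, gN_unit u.isUnit, mul_one]
    change gNh s.prod = ∏ p ∈ s.toFinset, gNh p ^ s.count p
    rw [Finset.prod_multiset_count, map_prod]
    simp
  have hgp : ∀ p, 0 ≤ gN p := fun p => by rw [gN_eq]; positivity
  have hprod : ∏ p ∈ s.toFinset, ((s.count p : ℝ) + 1) ≤ C1 ^ V.card * gN m ^ ε := by
    refine (Finset.prod_le_prod (fun p _ => by positivity) hterm).trans ?_
    rw [Finset.prod_mul_distrib, Real.finsetProd_rpow _ _ (fun p _ => pow_nonneg (hgp p) _), ← hgm]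
    refine mul_le_mul_of_nonneg_right ?_ (Real.rpow_nonneg (hgp m) _)
    rw [Finset.prod_ite, Finset.prod_const, Finset.prod_const_one, mul_one]
    refine pow_le_pow_right₀ hC1' (Finset.card_le_card fun p hp => (Finset.mem_filter.mp hp).2)
  calc (T.card : ℝ) ≤ U.card * ∏ p ∈ s.toFinset, ((s.count p : ℝ) + 1) := by exact_mod_cast hcard
    _ ≤ U.card * (C1 ^ V.card * gN m ^ ε) := by gcongr
    _ = _ := by ring

lemma card_fib {α β : Type*} [DecidableEq β] (s : Finset α) (f : α → β) (D : ℝ)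
    (h : ∀ a0 ∈ s, ((s.filter fun a => f a = f a0).card : ℝ) ≤ D) :
    (s.card : ℝ) ≤ D * (s.image f).card := by
  rw [Finset.card_eq_sum_card_image f s]
  push_cast
  calc _ ≤ ∑ b ∈ s.image f, D := by
        refine Finset.sum_le_sum fun b hb => ?_
        obtain ⟨a0, ha0, rfl⟩ := Finset.mem_image.mp hb
        exact h a0 ha0
    _ = _ := by rw [Finset.sum_const, nsmul_eq_mul]; ring

lemma countA (ε : ℝ) (hε : 0 < ε) : ∃ C : ℝ, 0 < C ∧ ∀ (Q δ : ℝ), 1 ≤ Q → 0 < δ →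
    ∀ q₀ r₀ : GaussianInt, Q / 2 < gN q₀ → gN q₀ ≤ Q → IsCoprime r₀ q₀ →
    ∀ A : Finset GaussianInt, (∀ q ∈ A, gN q ≤ Q ∧ ∃ r : GaussianInt,
      ‖(r : ℂ) - (q : ℂ) ^ 2 * ((r₀ : ℂ) / (q₀ : ℂ) ^ 2)‖ ≤ Q * δ) →
    (A.card : ℝ) ≤ 4 + C * Q ^ ε * (1 + 4 * Q ^ 2 * δ) := by
  classical
  obtain ⟨CD, hCD, hdiv⟩ := divisor_bound ε hε
  set K8 : Finset GaussianInt := (fin_disc 64).toFinset with hK8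
  have hK8pos : 0 < K8.card := Finset.card_pos.mpr ⟨1, by
    simp only [hK8, Set.Finite.mem_toFinset, Set.mem_ofPred_eq]
    rw [gN_unit isUnit_one]; norm_num⟩
  refine ⟨Real.sqrt (2 * K8.card * CD * 4 ^ ε), by positivity, ?_⟩
  intro Q δ hQ hδ q₀ r₀ hq₀ hq₀' hcop A hA
  have hQ0 : 0 < Q := by linarith
  have hq₀ne : q₀ ≠ 0 := by
    rintro rfl
    simp [gN] at hq₀; linarith
  have hq₀C : (q₀ : ℂ) ≠ 0 := by rwa [Ne, GaussianInt.toComplex_eq_zero]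
  choose! ρ hρ using fun q hq => (hA q hq).2
  set f : GaussianInt × GaussianInt → GaussianInt := fun p => (p.1 - p.2) * (p.1 + p.2) with hf
  set D : ℝ := CD * (4 * Q ^ 2) ^ ε with hD
  have hD0 : 0 ≤ D := by positivity
  set P0 := (A ×ˢ A).filter (fun p => f p = 0) with hP0
  set P1 := (A ×ˢ A).filter (fun p => ¬ f p = 0) with hP1
  have hsplit : P0.card + P1.card = A.card * A.card := by
    rw [hP0, hP1, Finset.card_filter_add_card_filter_not, Finset.card_product]
  have hP0card : P0.card ≤ 2 * A.card := by
    have : P0 ⊆ A.image (fun q => (q, q)) ∪ A.image (fun q => (q, -q)) := by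
      intro p hp
      rw [hP0, Finset.mem_filter, Finset.mem_product] at hp
      rw [Finset.mem_union, Finset.mem_image, Finset.mem_image]
      rcases mul_eq_zero.mp hp.2 with h | h
      · left; exact ⟨p.1, hp.1.1, Prod.ext rfl (sub_eq_zero.mp h)⟩
      · right; exact ⟨p.1, hp.1.1, Prod.ext rfl (by simp only; linear_combination -h)⟩
    have h1 := Finset.card_le_card this
    have h2 := Finset.card_union_le (A.image (fun q => (q, q))) (A.image (fun q => (q, -q)))
    have h3 := Finset.card_image_le (s := A) (f := fun q => (q, q))
    have h4 := Finset.card_image_le (s := A) (f := fun q => (q, -q))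
    lia
  have hnq : ∀ q ∈ A, ‖(q : ℂ) ^ 2‖ ≤ Q := by
    intro q hq
    rw [norm_pow, ← gN_eq]; exact (hA q hq).1
  have hfC : ∀ p, ((f p : GaussianInt) : ℂ) = (p.1 : ℂ) ^ 2 - (p.2 : ℂ) ^ 2 := by
    intro p; simp only [hf, map_mul, map_sub, map_add]; ring
  have hfn : ∀ p ∈ P1, ‖((f p : GaussianInt) : ℂ)‖ ≤ 2 * Q := by
    intro p hp
    rw [hP1, Finset.mem_filter, Finset.mem_product] at hp
    rw [hfC]
    refine (norm_sub_le _ _).trans ?_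
    linarith [hnq _ hp.1.1, hnq _ hp.1.2]
  have hP1card : (P1.card : ℝ) ≤ D * (P1.image f).card := by
    refine card_fib P1 f D fun p0 hp0 => ?_
    have hm : f p0 ≠ 0 := by
      rw [hP1, Finset.mem_filter] at hp0; exact hp0.2
    have hinj : Set.InjOn (fun p : GaussianInt × GaussianInt => p.1 - p.2)
        (P1.filter fun p => f p = f p0 : Finset _) := by
      intro p hp p' hp' heq
      rw [Finset.mem_coe, Finset.mem_filter] at hp hp'
      simp only at heq
      have h1 : f p = f p' := hp.2.trans hp'.2.symm
      have hne : p.1 - p.2 ≠ 0 := by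
        intro h0
        apply hm
        rw [← hp.2]; simp only [hf, h0, zero_mul]
      simp only [hf] at h1
      rw [← heq] at h1
      have h2 := mul_left_cancel₀ hne h1
      have h3 : (2 : GaussianInt) * p.1 = 2 * p'.1 := by linear_combination heq + h2
      have h4 : (2 : GaussianInt) * p.2 = 2 * p'.2 := by linear_combination h2 - heq
      have h20 : (2 : GaussianInt) ≠ 0 := by decide
      exact Prod.ext (mul_left_cancel₀ h20 h3) (mul_left_cancel₀ h20 h4)
    rw [← Finset.card_image_of_injOn hinj]
    refine (hdiv (f p0) hm _ ?_).trans ?_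
    · intro d hd
      obtain ⟨p, hp, rfl⟩ := Finset.mem_image.mp hd
      rw [Finset.mem_filter] at hp
      rw [← hp.2]
      exact Dvd.intro _ rfl
    · rw [hD]
      have h1 := hfn p0 hp0
      have h2 : gN (f p0) ≤ 4 * Q ^ 2 := by
        rw [gN_eq]
        calc _ ≤ (2 * Q) ^ 2 := by gcongr
          _ = _ := by ring
      have h3 : 0 ≤ gN (f p0) := by rw [gN_eq]; positivity
      gcongr
  -- the residues
  have hw : ∀ m ∈ P1.image f, ‖(m : ℂ)‖ ≤ 2 * Q ∧ ∃ w : GaussianInt,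
      ‖(w : ℂ)‖ ≤ 2 * Q ^ 2 * δ ∧ q₀ ^ 2 ∣ m * r₀ - w := by
    intro m hm
    obtain ⟨p, hp, rfl⟩ := Finset.mem_image.mp hm
    refine ⟨hfn p hp, ?_⟩
    rw [hP1, Finset.mem_filter, Finset.mem_product] at hp
    refine ⟨f p * r₀ - (ρ p.1 - ρ p.2) * q₀ ^ 2, ?_, ?_⟩
    · have h1 := hρ p.1 hp.1.1
      have h2 := hρ p.2 hp.1.2
      have h3 : ((f p * r₀ - (ρ p.1 - ρ p.2) * q₀ ^ 2 : GaussianInt) : ℂ)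
          = (((ρ p.2 : ℂ) - (p.2 : ℂ) ^ 2 * ((r₀ : ℂ) / (q₀ : ℂ) ^ 2))
            - ((ρ p.1 : ℂ) - (p.1 : ℂ) ^ 2 * ((r₀ : ℂ) / (q₀ : ℂ) ^ 2))) * (q₀ : ℂ) ^ 2 := by
        rw [GaussianInt.toComplex_sub, GaussianInt.toComplex_mul (f p) r₀, hfC,
          GaussianInt.toComplex_mul, GaussianInt.toComplex_sub, map_pow]
        field_simp
        ring
      rw [h3, norm_mul]
      have h4 : ‖(q₀ : ℂ) ^ 2‖ ≤ Q := by rw [norm_pow, ← gN_eq]; exact hq₀'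
      calc _ ≤ (Q * δ + Q * δ) * Q := by
            gcongr
            exact (norm_sub_le _ _).trans (add_le_add h2 h1)
        _ = _ := by ring
    · exact ⟨ρ p.1 - ρ p.2, by ring⟩
  choose! W hW using fun m hm => (hw m hm).2
  have hMs : ((P1.image f).card : ℝ) ≤ K8.card * ((P1.image f).image W).card := by
    refine card_fib (P1.image f) W K8.card fun m0 hm0 => ?_
    have : ((P1.image f).filter fun m => W m = W m0) ⊆ K8.image (fun k => m0 + q₀ ^ 2 * k) := by
      intro m hm
      rw [Finset.mem_filter] at hm
      have h1 := (hW m hm.1).2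
      have h2 := (hW m0 hm0).2
      rw [hm.2] at h1
      have h3 : q₀ ^ 2 ∣ (m - m0) * r₀ := by
        have := dvd_sub h1 h2
        convert this using 1; ring
      have h4 : q₀ ^ 2 ∣ m - m0 := (hcop.symm.pow_left (m := 2)).dvd_of_dvd_mul_right h3
      obtain ⟨k, hk⟩ := h4
      refine Finset.mem_image.mpr ⟨k, ?_, by rw [← hk]; ring⟩
      simp only [hK8, Set.Finite.mem_toFinset, Set.mem_ofPred_eq]
      have h5 : ‖((m - m0 : GaussianInt) : ℂ)‖ ≤ 4 * Q := by
        rw [map_sub]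
        refine (norm_sub_le _ _).trans ?_
        linarith [(hw m hm.1).1, (hw m0 hm0).1]
      rw [hk, map_mul, map_pow, norm_mul, norm_pow, ← gN_eq] at h5
      have h6 : ‖(k : ℂ)‖ ≤ 8 := by
        by_contra hcon
        push Not at hcon
        nlinarith
      rw [gN_eq]
      calc _ ≤ (8 : ℝ) ^ 2 := by gcongr
        _ = _ := by norm_num
    exact_mod_cast (Finset.card_le_card this).trans Finset.card_image_le
  have hWs : (((P1.image f).image W).card : ℝ) ≤ (2 * (2 * Q ^ 2 * δ) + 1) ^ 2 := by
    refine cnt _ 0 _ (by positivity) ?_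
    intro w hw'
    obtain ⟨m, hm, rfl⟩ := Finset.mem_image.mp hw'
    rw [sub_zero]
    exact (hW m hm).1
  set Y : ℝ := 1 + 4 * Q ^ 2 * δ with hY
  have hY0 : 0 < Y := by positivity
  have hX : (P1.card : ℝ) ≤ D * (K8.card * Y ^ 2) := by
    refine hP1card.trans (mul_le_mul_of_nonneg_left (hMs.trans ?_) hD0)
    refine mul_le_mul_of_nonneg_left (hWs.trans (le_of_eq ?_)) (by positivity)
    rw [hY]; ring
  have htot : (A.card : ℝ) ^ 2 ≤ 2 * A.card + D * (K8.card * Y ^ 2) := by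
    have h1 : (P0.card : ℝ) + P1.card = A.card * A.card := by exact_mod_cast hsplit
    have h2 : (P0.card : ℝ) ≤ 2 * A.card := by exact_mod_cast hP0card
    nlinarith
  set Z : ℝ := Real.sqrt (2 * K8.card * CD * 4 ^ ε) * Q ^ ε * Y with hZ
  have hZ0 : 0 ≤ Z := by positivity
  have hZ2 : Z ^ 2 = 2 * (D * (K8.card * Y ^ 2)) := by
    rw [hZ, mul_pow, mul_pow, Real.sq_sqrt (by positivity), hD,
      Real.mul_rpow (by norm_num) (by positivity)]
    have : (Q ^ 2) ^ ε = (Q ^ ε) ^ 2 := by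
      rw [← Real.rpow_natCast, ← Real.rpow_mul hQ0.le, ← Real.rpow_natCast, ← Real.rpow_mul hQ0.le,
        mul_comm]
    rw [this]; ring
  by_contra hcon
  push Not at hcon
  nlinarith

lemma block (ε : ℝ) (hε : 0 < ε) : ∃ C : ℝ, 0 < C ∧ ∀ (Q N : ℝ), 1 ≤ Q → 1 ≤ N →
    ∀ (S : Finset GaussianInt), (∀ n ∈ S, gN n ≤ N) → ∀ a : GaussianInt → ℂ,
    ∀ J : Finset (GaussianInt × GaussianInt),
    (∀ p ∈ J, Q / 2 < gN p.1 ∧ gN p.1 ≤ Q ∧ IsCoprime p.2 p.1) →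
    (∀ p ∈ J, ∀ p' ∈ J, p.1 = p'.1 → p.1 ^ 2 ∣ p.2 - p'.2 → p = p') →
    ∑ p ∈ J, ‖∑ n ∈ S, a n * e (((n : ℂ) * ((p.2 : ℂ) / (p.1 : ℂ) ^ 2)).re)‖ ^ 2
      ≤ C * (Q ^ ε * (Q ^ 3 + Q ^ 2 * Real.sqrt N + Real.sqrt Q * N)) * ∑ n ∈ S, ‖a n‖ ^ 2 := by
  classical
  obtain ⟨C, hC, hcount⟩ := countA ε hε
  refine ⟨Real.exp 2 ^ 4 * (648 + 300 * C), by positivity, ?_⟩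
  intro Q N hQ hN S hS a J hJ hinj
  have hQ0 : 0 < Q := by linarith
  have hN0 : 0 < N := by linarith
  set L : ℕ := ⌊Real.sqrt N⌋₊ with hL
  set M : ℕ := 2 * L + 1 with hM
  have hsN : 1 ≤ Real.sqrt N := Real.one_le_sqrt.mpr hN
  have hL0 : 0 < L := Nat.floor_pos.mpr hsN
  have hLle : (L : ℝ) ≤ Real.sqrt N := Nat.floor_le (by positivity)
  have hMR : (M : ℝ) = 2 * L + 1 := by rw [hM]; push_cast; ring
  have hM0 : (0 : ℝ) < M := by rw [hMR]; positivity
  have hMle : (M : ℝ) ≤ 3 * Real.sqrt N := by rw [hMR]; linarith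
  set K : ℝ := 324 * Q ^ 3 / M ^ 2 + 9 * (4 + C * Q ^ ε * (1 + 4 * Q ^ 2 * (2 / M))) with hK
  have hK0 : 0 ≤ K := by positivity
  have hbox : ∀ n ∈ S, |n.re| ≤ L ∧ |n.im| ≤ L := by
    have : ∀ k : ℤ, (k : ℝ) ^ 2 ≤ N → |k| ≤ L := by
      intro k hk
      have h1 : |(k : ℝ)| ≤ Real.sqrt N := Real.abs_le_sqrt hk
      have h2 : (k.natAbs : ℝ) ≤ Real.sqrt N := by rwa [Nat.cast_natAbs, Int.cast_abs]
      have := Nat.le_floor h2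
      rw [Int.abs_eq_natAbs]
      exact_mod_cast this
    intro n hn
    have h1 := hS n hn
    rw [gN] at h1
    exact ⟨this _ (by nlinarith [sq_nonneg (n.im : ℝ)]), this _ (by nlinarith [sq_nonneg (n.re : ℝ)])⟩
  have hmain := largeSieve J S L M hL0 hM hbox a (fun p => (p.2 : ℂ) / (p.1 : ℂ) ^ 2) K ?_ hK0
  · refine hmain.trans ?_
    refine mul_le_mul_of_nonneg_right ?_ (Finset.sum_nonneg fun _ _ => by positivity)
    rw [mul_assoc]
    refine mul_le_mul_of_nonneg_left ?_ (by positivity)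
    have hKM : K * (M : ℝ) ^ 2 = 324 * Q ^ 3 + 36 * M ^ 2 + 9 * C * Q ^ ε * (M ^ 2 + 8 * Q ^ 2 * M) := by
      rw [hK]; field_simp; ring
    rw [hKM]
    have hM2 : (M : ℝ) ^ 2 ≤ 9 * N := by
      calc (M : ℝ) ^ 2 ≤ (3 * Real.sqrt N) ^ 2 := by gcongr
        _ = 9 * N := by rw [mul_pow, Real.sq_sqrt hN0.le]; norm_num
    have hE : 1 ≤ Q ^ ε := Real.one_le_rpow hQ hε.le
    set E := Q ^ ε
    have hsQ : 1 ≤ Real.sqrt Q := Real.one_le_sqrt.mpr hQ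
    have hNQ : N ≤ Real.sqrt Q * N := le_mul_of_one_le_left hN0.le hsQ
    set V := Real.sqrt Q * N
    set R := Q ^ 2 * Real.sqrt N with hR
    have hR0 : 0 ≤ R := by positivity
    have hQ3 : 0 ≤ Q ^ 3 := by positivity
    have hQM : Q ^ 2 * M ≤ 3 * R := by
      calc Q ^ 2 * M ≤ Q ^ 2 * (3 * Real.sqrt N) := by gcongr
        _ = _ := by rw [hR]; ring
    have hV0 : 0 ≤ V := by linarith
    have i1 : 324 * Q ^ 3 + 36 * (M : ℝ) ^ 2 ≤ 648 * (E * (Q ^ 3 + R + V)) := by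
      have : (Q ^ 3 + R + V) ≤ E * (Q ^ 3 + R + V) := le_mul_of_one_le_left (by positivity) hE
      linarith
    have i2 : 9 * C * E * ((M : ℝ) ^ 2 + 8 * Q ^ 2 * M) ≤ 300 * C * (E * (Q ^ 3 + R + V)) := by
      calc 9 * C * E * ((M : ℝ) ^ 2 + 8 * Q ^ 2 * M) ≤ 9 * C * E * (9 * V + 24 * R) := by
            refine mul_le_mul_of_nonneg_left ?_ (by positivity)
            linarith
        _ ≤ 9 * C * E * (300 / 9 * (Q ^ 3 + R + V)) := by
            refine mul_le_mul_of_nonneg_left ?_ (by positivity)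
            linarith
        _ = _ := by ring
    linarith
  · -- counting
    intro j₀ hj₀ J' hJ' hz
    obtain ⟨hq1, hq2, hq3⟩ := hJ j₀ hj₀
    choose! z hz using hz
    set δ : ℝ := 2 / M with hδ
    have hδ0 : 0 < δ := by positivity
    set α : ℂ := (j₀.2 : ℂ) / (j₀.1 : ℂ) ^ 2 with hα
    have hne : ∀ p ∈ J', (p.1 : ℂ) ≠ 0 := by
      intro p hp
      rw [Ne, GaussianInt.toComplex_eq_zero]
      intro h0
      have := (hJ p (hJ' hp)).1
      rw [h0] at this
      simp [gN] at this; linarith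
    have hr : ∀ p ∈ J', ‖((p.2 - z p * p.1 ^ 2 : GaussianInt) : ℂ) - (p.1 : ℂ) ^ 2 * α‖ ≤ Q * δ := by
      intro p hp
      have h0 := hne p hp
      have h1 : ((p.2 - z p * p.1 ^ 2 : GaussianInt) : ℂ) - (p.1 : ℂ) ^ 2 * α
          = (p.1 : ℂ) ^ 2 * ((p.2 : ℂ) / (p.1 : ℂ) ^ 2 - α - z p) := by
        rw [map_sub, map_mul, map_pow]; field_simp; ring
      rw [h1, norm_mul, norm_pow, ← gN_eq]
      have h2 := hz p hp
      have h3 := Complex.norm_le_abs_re_add_abs_im ((p.2 : ℂ) / (p.1 : ℂ) ^ 2 - α - z p)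
      have h4 : δ = 1 / M + 1 / M := by rw [hδ]; ring
      have h5 := (hJ p (hJ' hp)).2.1
      gcongr
      linarith [h2.1, h2.2]
    have hcard : (J'.card : ℝ) ≤ (2 * (Q * δ) + 1) ^ 2 * (J'.image Prod.fst).card := by
      refine card_fib J' Prod.fst _ fun p0 hp0 => ?_
      have hi : Set.InjOn (fun p : GaussianInt × GaussianInt => p.2 - z p * p.1 ^ 2)
          (J'.filter fun p => p.1 = p0.1 : Finset _) := by
        intro p hp p' hp' heq
        rw [Finset.mem_coe, Finset.mem_filter] at hp hp'
        simp only at heq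
        have h1 : p.1 = p'.1 := hp.2.trans hp'.2.symm
        refine hinj p (hJ' hp.1) p' (hJ' hp'.1) h1 ⟨z p - z p', ?_⟩
        rw [← h1] at heq
        linear_combination heq
      rw [← Finset.card_image_of_injOn hi]
      refine cnt _ ((p0.1 : ℂ) ^ 2 * α) _ (by positivity) ?_
      intro w hw
      obtain ⟨p, hp, rfl⟩ := Finset.mem_image.mp hw
      rw [Finset.mem_filter] at hp
      rw [← hp.2]
      exact hr p hp.1
    have hA1 : ((J'.image Prod.fst).card : ℝ) ≤ 9 * Q := by
      have h1 : ((J'.image Prod.fst).card : ℝ) ≤ (2 * Real.sqrt Q + 1) ^ 2 := by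
        refine cnt _ 0 _ (by positivity) ?_
        intro q hq
        obtain ⟨p, hp, rfl⟩ := Finset.mem_image.mp hq
        rw [sub_zero]
        refine Real.le_sqrt_of_sq_le ?_
        rw [← gN_eq]
        exact (hJ p (hJ' hp)).2.1
      have hsQ : 1 ≤ Real.sqrt Q := Real.one_le_sqrt.mpr hQ
      calc _ ≤ _ := h1
        _ ≤ (3 * Real.sqrt Q) ^ 2 := by gcongr; linarith
        _ = 9 * Q := by rw [mul_pow, Real.sq_sqrt hQ0.le]; norm_num
    have hA2 := hcount Q δ hQ hδ0 j₀.1 j₀.2 hq1 hq2 hq3 (J'.image Prod.fst) (by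
      intro q hq
      obtain ⟨p, hp, rfl⟩ := Finset.mem_image.mp hq
      exact ⟨(hJ p (hJ' hp)).2.1, _, hr p hp⟩)
    rcases le_total 1 (Q * δ) with h1 | h1
    · have : (J'.card : ℝ) ≤ 324 * Q ^ 3 / M ^ 2 := by
        calc _ ≤ _ := hcard
          _ ≤ (3 * (Q * δ)) ^ 2 * (9 * Q) := by gcongr; linarith
          _ = _ := by rw [hδ]; field_simp; norm_num
      refine this.trans ?_
      rw [hK]
      have : 0 ≤ 9 * (4 + C * Q ^ ε * (1 + 4 * Q ^ 2 * (2 / M))) := by positivity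
      linarith
    · have : (J'.card : ℝ) ≤ 9 * (4 + C * Q ^ ε * (1 + 4 * Q ^ 2 * δ)) := by
        calc _ ≤ _ := hcard
          _ ≤ (2 * 1 + 1) ^ 2 * (4 + C * Q ^ ε * (1 + 4 * Q ^ 2 * δ)) := by gcongr
          _ = _ := by ring
      refine this.trans ?_
      rw [hK]
      have : 0 ≤ 324 * Q ^ 3 / (M : ℝ) ^ 2 := by positivity
      linarith

lemma dyadic (ε : ℝ) (hε : 0 < ε) : ∃ C : ℝ, 0 < C ∧ ∀ (N : ℝ), 1 ≤ N →
    ∀ (S : Finset GaussianInt), (∀ n ∈ S, gN n ≤ N) → ∀ a : GaussianInt → ℂ,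
    ∀ (k : ℕ) (Q : ℝ), 0 < Q → Q < 2 ^ k →
    ∀ J : Finset (GaussianInt × GaussianInt),
    (∀ p ∈ J, p.1 ≠ 0 ∧ gN p.1 ≤ Q ∧ IsCoprime p.2 p.1) →
    (∀ p ∈ J, ∀ p' ∈ J, p.1 = p'.1 → p.1 ^ 2 ∣ p.2 - p'.2 → p = p') →
    ∑ p ∈ J, ‖∑ n ∈ S, a n * e (((n : ℂ) * ((p.2 : ℂ) / (p.1 : ℂ) ^ 2)).re)‖ ^ 2
      ≤ C * (Q ^ ε * (Q ^ 3 + Q ^ 2 * Real.sqrt N + Real.sqrt Q * N)) * ∑ n ∈ S, ‖a n‖ ^ 2 := by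
  classical
  obtain ⟨C, hC, hb⟩ := block ε hε
  refine ⟨4 * C, by positivity, ?_⟩
  intro N hN S hS a k
  have hAA : 0 ≤ ∑ n ∈ S, ‖a n‖ ^ 2 := Finset.sum_nonneg fun _ _ => by positivity
  have small : ∀ Q : ℝ, 0 < Q → Q < 1 → ∀ J : Finset (GaussianInt × GaussianInt),
      (∀ p ∈ J, p.1 ≠ 0 ∧ gN p.1 ≤ Q ∧ IsCoprime p.2 p.1) →
      ∑ p ∈ J, ‖∑ n ∈ S, a n * e (((n : ℂ) * ((p.2 : ℂ) / (p.1 : ℂ) ^ 2)).re)‖ ^ 2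
      ≤ 4 * C * (Q ^ ε * (Q ^ 3 + Q ^ 2 * Real.sqrt N + Real.sqrt Q * N)) * ∑ n ∈ S, ‖a n‖ ^ 2 := by
    intro Q hQ0 hQ1 J hJ
    have : J = ∅ := by
      refine Finset.eq_empty_of_forall_notMem fun p hp => ?_
      have h1 := hJ p hp
      linarith [gN_one_le h1.1]
    rw [this, Finset.sum_empty]
    positivity
  induction k with
  | zero =>
    intro Q hQ0 hQ1 J hJ _
    exact small Q hQ0 (by simpa using hQ1) J hJ
  | succ k ih =>
    intro Q hQ0 hQ1 J hJ hinj
    rcases lt_or_ge Q 1 with h | h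
    · exact small Q hQ0 h J hJ
    rw [← Finset.sum_filter_add_sum_filter_not J (fun p => gN p.1 ≤ Q / 2)]
    have s1 := ih (Q / 2) (by linarith) (by rw [pow_succ] at hQ1; linarith)
      (J.filter fun p => gN p.1 ≤ Q / 2) (by
        intro p hp
        rw [Finset.mem_filter] at hp
        have := hJ p hp.1
        exact ⟨this.1, hp.2, this.2.2⟩) (by
        intro p hp p' hp'
        exact hinj p (Finset.mem_filter.mp hp).1 p' (Finset.mem_filter.mp hp').1)
    have s2 := hb Q N h hN S hS a (J.filter fun p => ¬ gN p.1 ≤ Q / 2) (by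
        intro p hp
        rw [Finset.mem_filter] at hp
        have := hJ p hp.1
        exact ⟨not_le.mp hp.2, this.2.1, this.2.2⟩) (by
        intro p hp p' hp'
        exact hinj p (Finset.mem_filter.mp hp).1 p' (Finset.mem_filter.mp hp').1)
    have hsq : Real.sqrt (Q / 2) ≤ 3 / 4 * Real.sqrt Q := by
      refine Real.sqrt_le_iff.mpr ⟨by positivity, ?_⟩
      rw [mul_pow, Real.sq_sqrt hQ0.le]; linarith
    have hB : (Q / 2) ^ ε * ((Q / 2) ^ 3 + (Q / 2) ^ 2 * Real.sqrt N + Real.sqrt (Q / 2) * N)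
        ≤ Q ^ ε * (3 / 4 * (Q ^ 3 + Q ^ 2 * Real.sqrt N + Real.sqrt Q * N)) := by
      have e1 : (Q / 2) ^ ε ≤ Q ^ ε := Real.rpow_le_rpow (by linarith) (by linarith) hε.le
      have e2 : (Q / 2) ^ 3 ≤ 3 / 4 * Q ^ 3 := by
        have : 0 ≤ Q ^ 3 := by positivity
        nlinarith
      have e3 : (Q / 2) ^ 2 * Real.sqrt N ≤ 3 / 4 * (Q ^ 2 * Real.sqrt N) := by
        have : 0 ≤ Q ^ 2 * Real.sqrt N := by positivity
        nlinarith
      have e4 : Real.sqrt (Q / 2) * N ≤ 3 / 4 * (Real.sqrt Q * N) := by nlinarith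
      have hN0 : 0 < N := by linarith
      gcongr
      linarith
    set X := Q ^ ε * (Q ^ 3 + Q ^ 2 * Real.sqrt N + Real.sqrt Q * N)
    refine (add_le_add s1 s2).trans ?_
    rw [← add_mul]
    refine mul_le_mul_of_nonneg_right ?_ hAA
    have := mul_le_mul_of_nonneg_left hB (by positivity : 0 ≤ 4 * C)
    refine (add_le_add_left this _).trans (le_of_eq ?_)
    ring

lemma fin_quot (q : GaussianInt) (hq : q ≠ 0) : Finite (GaussianInt ⧸ Ideal.span {q}) := by
  have hf : Finite {z : GaussianInt | gN z ≤ gN q} := (fin_disc (gN q)).to_subtype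
  refine Finite.of_surjective
    (fun z : {z : GaussianInt | gN z ≤ gN q} => Ideal.Quotient.mk (Ideal.span {q}) z.1) ?_
  intro x
  obtain ⟨y, rfl⟩ := Ideal.Quotient.mk_surjective x
  refine ⟨⟨y % q, ?_⟩, ?_⟩
  · have := GaussianInt.norm_mod_lt y hq
    change gN (y % q) ≤ gN q
    rw [gN_norm, gN_norm]
    exact_mod_cast this.le
  · rw [Ideal.Quotient.eq, Ideal.mem_span_singleton]
    exact ⟨-(y / q), by
      change y % q - y = _
      rw [GaussianInt.mod_def]; ring⟩

/-- **The large sieve with square moduli for ℤ[i]** (Theorem 1).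
For every `ε > 0` there is `C = C(ε) > 0` such that for all `Q, N ≥ 1`, all complex
sequences `(a_n)` indexed by Gaussian integers, and any fixed complete system of
representatives of the invertible residue classes modulo `q²` (given by `rep`), one has
`∑_{0 ≠ q, N(q) ≤ Q} ∑_{r mod q², (r,q)=1} |∑_{N(n) ≤ N} a_n e(Re(n r / q²))|²
  ≤ C (QN)^ε (Q³ + Q²√N + √Q · N) ∑_{N(n) ≤ N} |a_n|²`. -/
theorem large_sieve_square_moduli_gaussian :
    ∀ ε : ℝ, 0 < ε → ∃ C : ℝ, 0 < C ∧
      ∀ (Q N : ℝ), 1 ≤ Q → 1 ≤ N → ∀ a : GaussianInt → ℂ,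
      ∀ rep : (q : GaussianInt) → (GaussianInt ⧸ Ideal.span {q ^ 2})ˣ → GaussianInt,
      (∀ (q : GaussianInt) (u : (GaussianInt ⧸ Ideal.span {q ^ 2})ˣ),
        Ideal.Quotient.mk (Ideal.span {q ^ 2}) (rep q u)
          = (u : GaussianInt ⧸ Ideal.span {q ^ 2})) →
      (∑' q : {q : GaussianInt // q ≠ 0 ∧ gN q ≤ Q},
        ∑' u : (GaussianInt ⧸ Ideal.span {(q : GaussianInt) ^ 2})ˣ,
          ‖∑' n : {n : GaussianInt // gN n ≤ N},
              a n * e ((((n : GaussianInt) : ℂ) * ((rep q u : GaussianInt) : ℂ)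
                / ((q : GaussianInt) : ℂ) ^ 2).re)‖ ^ 2)
        ≤ C * (Q * N) ^ ε * (Q ^ 3 + Q ^ 2 * Real.sqrt N + Real.sqrt Q * N) *
          ∑' n : {n : GaussianInt // gN n ≤ N}, ‖a n‖ ^ 2 := by
  classical
  intro ε hε
  obtain ⟨C, hC, hmain⟩ := dyadic ε hε
  refine ⟨C, hC, ?_⟩
  intro Q N hQ hN a rep hrep
  have hQ0 : 0 < Q := by linarith
  have hN0 : 0 < N := by linarith
  have hfq : Finite {q : GaussianInt // q ≠ 0 ∧ gN q ≤ Q} :=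
    ((fin_disc Q).subset fun z hz => hz.2 : {z : GaussianInt | z ≠ 0 ∧ gN z ≤ Q}.Finite).to_subtype
  have hfn : Finite {n : GaussianInt // gN n ≤ N} := (fin_disc N).to_subtype
  have hfu : ∀ q : {q : GaussianInt // q ≠ 0 ∧ gN q ≤ Q},
      Finite (GaussianInt ⧸ Ideal.span {(q : GaussianInt) ^ 2}) :=
    fun q => fin_quot _ (pow_ne_zero 2 q.2.1)
  let _ := Fintype.ofFinite {q : GaussianInt // q ≠ 0 ∧ gN q ≤ Q}
  let _ := Fintype.ofFinite {n : GaussianInt // gN n ≤ N}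
  let _ : ∀ q : {q : GaussianInt // q ≠ 0 ∧ gN q ≤ Q},
    Fintype (GaussianInt ⧸ Ideal.span {(q : GaussianInt) ^ 2})ˣ := fun q => Fintype.ofFinite _
  set S : Finset GaussianInt := (fin_disc N).toFinset with hS
  have hSmem : ∀ n, n ∈ S ↔ gN n ≤ N := by
    intro n; simp [hS]
  have hsumC : ∀ F : GaussianInt → ℂ, ∑' n : {n : GaussianInt // gN n ≤ N}, F n = ∑ n ∈ S, F n := by
    intro F
    rw [tsum_fintype, Finset.sum_subtype S hSmem]
  have hsumR : ∀ F : GaussianInt → ℝ, ∑' n : {n : GaussianInt // gN n ≤ N}, F n = ∑ n ∈ S, F n := by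
    intro F
    rw [tsum_fintype, Finset.sum_subtype S hSmem]
  have hR := hsumR (fun n => ‖a n‖ ^ 2)
  rw [hR, tsum_fintype]
  set Φ : GaussianInt × GaussianInt → ℝ := fun p =>
    ‖∑ n ∈ S, a n * e (((n : ℂ) * ((p.2 : ℂ) / (p.1 : ℂ) ^ 2)).re)‖ ^ 2 with hΦ
  set g : (Σ q : {q : GaussianInt // q ≠ 0 ∧ gN q ≤ Q},
      (GaussianInt ⧸ Ideal.span {(q : GaussianInt) ^ 2})ˣ) → GaussianInt × GaussianInt :=
    fun x => (x.1.1, rep x.1.1 x.2) with hg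
  have key : ∀ x y, (g x).1 = (g y).1 → (g x).1 ^ 2 ∣ (g x).2 - (g y).2 → x = y := by
    rintro ⟨⟨q, hq⟩, u⟩ ⟨⟨q', hq'⟩, u'⟩ h1 h2
    simp only [hg] at h1 h2
    subst h1
    have h3 : u = u' := by
      apply Units.ext
      rw [← hrep q u, ← hrep q u', Ideal.Quotient.eq, Ideal.mem_span_singleton]
      exact h2
    subst h3
    rfl
  have hginj : Function.Injective g := by
    intro x y hxy
    refine key x y (by rw [hxy]) (by rw [hxy]; simp)
  have hLHS : ∑ q : {q : GaussianInt // q ≠ 0 ∧ gN q ≤ Q},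
        ∑' u : (GaussianInt ⧸ Ideal.span {(q : GaussianInt) ^ 2})ˣ,
          ‖∑' n : {n : GaussianInt // gN n ≤ N},
              a n * e ((((n : GaussianInt) : ℂ) * ((rep q u : GaussianInt) : ℂ)
                / ((q : GaussianInt) : ℂ) ^ 2).re)‖ ^ 2
      = ∑ p ∈ Finset.univ.image g, Φ p := by
    rw [Finset.sum_image (fun x _ y _ h => hginj h), ← Finset.univ_sigma_univ, Finset.sum_sigma]
    refine Finset.sum_congr rfl fun q _ => ?_
    rw [tsum_fintype]
    refine Finset.sum_congr rfl fun u _ => ?_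
    simp only [hΦ, hg]
    rw [hsumC (fun n => a n * e (((n : ℂ) * ((rep q u : GaussianInt) : ℂ)
                / ((q : GaussianInt) : ℂ) ^ 2).re))]
    simp only [mul_div_assoc]
  rw [hLHS]
  obtain ⟨k, hk⟩ := pow_unbounded_of_one_lt Q (by norm_num : (1 : ℝ) < 2)
  have hfin := hmain N hN S (fun n hn => (hSmem n).mp hn) a k Q hQ0 hk (Finset.univ.image g) ?_ ?_
  · refine hfin.trans ?_
    refine mul_le_mul_of_nonneg_right ?_ (Finset.sum_nonneg fun _ _ => by positivity)
    rw [mul_assoc]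
    refine mul_le_mul_of_nonneg_left ?_ hC.le
    refine mul_le_mul_of_nonneg_right ?_ (by positivity)
    exact Real.rpow_le_rpow hQ0.le (le_mul_of_one_le_right hQ0.le hN) hε.le
  · intro p hp
    obtain ⟨⟨⟨q, hq⟩, u⟩, _, rfl⟩ := Finset.mem_image.mp hp
    refine ⟨hq.1, hq.2, ?_⟩
    simp only [hg]
    obtain ⟨v, hv⟩ := Ideal.Quotient.mk_surjective
      ((u⁻¹ : (GaussianInt ⧸ Ideal.span {q ^ 2})ˣ) : GaussianInt ⧸ Ideal.span {q ^ 2})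
    have h1 : Ideal.Quotient.mk (Ideal.span {q ^ 2}) (rep q u * v)
        = Ideal.Quotient.mk (Ideal.span {q ^ 2}) 1 := by
      rw [map_mul, hrep q u, hv, map_one]
      exact u.mul_inv
    rw [Ideal.Quotient.eq, Ideal.mem_span_singleton] at h1
    obtain ⟨w, hw⟩ := h1
    exact ⟨v, -(q * w), by linear_combination hw⟩
  · intro p hp p' hp' h1 h2
    obtain ⟨x, _, rfl⟩ := Finset.mem_image.mp hp
    obtain ⟨y, _, rfl⟩ := Finset.mem_image.mp hp'
    rw [key x y h1 h2]
end
end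

section
/- Let f : ℝ^d → ℂ be a smooth function of rapid decay (i.e. every derivative of f decays faster than any negative power of ‖y‖₂), let Λ be a lattice of full rank in ℝ^d, let B > 0 and a ∈ ℝ^d. Then ∑_{y ∈ a+Λ} f(y/B) = (B^d / Vol(ℝ^d/Λ)) · ∑_{x ∈ Λ'} e(a·x) · f̂(Bx), where Λ' := {x ∈ ℝ^d : x·y ∈ ℤ for all y ∈ Λ} is the dual lattice and f̂(x) := ∫_{ℝ^d} f(y) e(−x·y) dy is the Fourier transform of f. -/
noncomputable section

open MeasureTheory
open scoped RealInnerProductSpace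

def icst {ι : Type*} (n : ι → ℤ) : ι → ℝ := fun i => (n i : ℝ)

def stdL (ι : Type*) [Fintype ι] : Submodule ℤ (ι → ℝ) :=
  Submodule.span ℤ (Set.range (Pi.basisFun ℝ ι))

instance (ι : Type*) [Fintype ι] : DiscreteTopology (stdL ι) :=
  inferInstanceAs (DiscreteTopology (Submodule.span ℤ (Set.range (Pi.basisFun ℝ ι))))

instance (ι : Type*) [Fintype ι] : Countable (stdL ι) :=
  inferInstanceAs (Countable (Submodule.span ℤ (Set.range (Pi.basisFun ℝ ι))))

def stdLEquiv (ι : Type*) [Fintype ι] : (ι → ℤ) ≃ stdL ι :=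
  ((Pi.basisFun ℝ ι).restrictScalars ℤ).equivFun.symm.toEquiv

lemma stdLEquiv_coe {ι : Type*} [Fintype ι] (n : ι → ℤ) :
    ((stdLEquiv ι n : stdL ι) : ι → ℝ) = icst n := by
  classical
  have : ((stdLEquiv ι n : stdL ι) : ι → ℝ) = ∑ i, n i • (Pi.basisFun ℝ ι i) := by
    change ((((Pi.basisFun ℝ ι).restrictScalars ℤ).equivFun.symm n : stdL ι) : ι → ℝ) = _
    rw [Module.Basis.equivFun_symm_apply]
    simp
  rw [this]
  ext j
  simp [icst, Finset.sum_apply, Pi.single_apply]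

lemma summable_inv_pow_icst {ι : Type*} [Fintype ι] :
    ∃ k : ℕ, Summable (fun n : ι → ℤ => ((1 + ‖icst n‖) ^ k)⁻¹) := by
  classical
  refine ⟨Module.finrank ℤ (stdL ι) + 1, ?_⟩
  set k := Module.finrank ℤ (stdL ι) + 1
  have h := ZLattice.summable_norm_pow_inv (stdL ι) k (by omega)
  have h2 := (stdLEquiv ι).summable_iff.mpr h
  refine Summable.of_norm_bounded_eventually h2 ?_
  have : ∀ᶠ n : ι → ℤ in Filter.cofinite, n ∉ ({0} : Set (ι → ℤ)) :=
    (Set.finite_singleton _).eventually_cofinite_notMem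
  filter_upwards [this] with n hn
  have hpos : 0 < ‖icst n‖ := by
    rw [norm_pos_iff]
    intro h0
    apply hn
    ext i
    have := congrFun h0 i
    simpa [icst] using this
  simp only [Function.comp, Submodule.coe_norm, stdLEquiv_coe]
  rw [Real.norm_of_nonneg (by positivity), inv_pow]
  gcongr
  linarith

lemma schwartz_bound {V : Type*} [NormedAddCommGroup V] [NormedSpace ℝ V]
    (h : SchwartzMap V ℂ) (k : ℕ) :
    ∃ C : ℝ, 0 ≤ C ∧ ∀ x, ‖h x‖ ≤ C * ((1 + ‖x‖) ^ k)⁻¹ := by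
  refine ⟨2 ^ k * (Finset.Iic (k, 0)).sup (fun m => SchwartzMap.seminorm ℝ m.1 m.2) h, by positivity, fun x => ?_⟩
  have := SchwartzMap.one_add_le_sup_seminorm_apply (𝕜 := ℝ) (m := (k, 0)) le_rfl le_rfl h x
  simp only [norm_iteratedFDeriv_zero] at this
  rw [← div_eq_mul_inv, le_div_iff₀ (by positivity), mul_comm]
  exact this

lemma schwartz_summable_aux {ι : Type*} [Fintype ι] (h : SchwartzMap (ι → ℝ) ℂ) (R : ℝ) (hR : 0 ≤ R) :
    ∃ u : (ι → ℤ) → ℝ, Summable u ∧ ∀ n, ∀ x : ι → ℝ, ‖x‖ ≤ R → ‖h (x + icst n)‖ ≤ u n := by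
  obtain ⟨k, hk⟩ := summable_inv_pow_icst (ι := ι)
  obtain ⟨C, hC, hb⟩ := schwartz_bound h k
  refine ⟨fun n => C * (1 + R) ^ k * ((1 + ‖icst n‖) ^ k)⁻¹, hk.mul_left _, fun n x hx => ?_⟩
  refine (hb _).trans ?_
  beta_reduce
  rw [mul_assoc]
  gcongr
  rw [← div_eq_mul_inv, le_div_iff₀ (by positivity), inv_mul_le_iff₀ (by positivity), ← mul_pow]
  gcongr
  have h1 : ‖icst n‖ ≤ ‖x + icst n‖ + ‖x‖ := by
    have := norm_sub_le (x + icst n) x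
    simpa using this
  nlinarith [norm_nonneg (x + icst n)]

lemma periodization_continuous {ι : Type*} [Fintype ι] (h : SchwartzMap (ι → ℝ) ℂ) :
    Continuous (fun x : ι → ℝ => ∑' n : ι → ℤ, h (x + icst n)) := by
  rw [continuous_iff_continuousAt]
  intro x
  obtain ⟨u, hu, hb⟩ := schwartz_summable_aux h (‖x‖ + 1) (by positivity)
  have : ContinuousOn (fun x : ι → ℝ => ∑' n : ι → ℤ, h (x + icst n)) (Metric.ball 0 (‖x‖ + 1)) := by
    refine continuousOn_tsum (fun n => ?_) hu (fun n y hy => hb n y ?_)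
    · exact (h.continuous.comp (continuous_id.add continuous_const)).continuousOn
    · simpa using (le_of_lt (by simpa using hy) : ‖y‖ ≤ ‖x‖ + 1)
  exact this.continuousAt (Metric.isOpen_ball.mem_nhds (by simp))

lemma unfold_integral {ι : Type*} [Fintype ι] (G : (ι → ℝ) → ℂ) (hG : Integrable G) :
    ∫ x in {x : ι → ℝ | ∀ i, x i ∈ Set.Ioc ((0 : ι → ℝ) i) ((0 : ι → ℝ) i + 1)},
      ∑' n : ι → ℤ, G (x + icst n) = ∫ x, G x := by
  have hset : ({x : ι → ℝ | ∀ i, x i ∈ Set.Ioc ((0 : ι → ℝ) i) ((0 : ι → ℝ) i + 1)} : Set (ι → ℝ))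
      =ᵐ[volume] ZSpan.fundamentalDomain (Pi.basisFun ℝ ι) := by
    rw [ZSpan.fundamentalDomain_pi_basisFun]
    have h1 := Measure.univ_pi_Ioc_ae_eq_Icc (μ := fun _ : ι => (volume : Measure ℝ)) (f := 0) (g := 1)
    have h2 := Measure.univ_pi_Ico_ae_eq_Icc (μ := fun _ : ι => (volume : Measure ℝ)) (f := 0) (g := 1)
    have h3 := h1.trans h2.symm
    have h4 : ({x : ι → ℝ | ∀ i, x i ∈ Set.Ioc ((0 : ι → ℝ) i) ((0 : ι → ℝ) i + 1)} : Set (ι → ℝ))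
        = Set.univ.pi fun i => Set.Ioc ((0 : ι → ℝ) i) ((1 : ι → ℝ) i) := by
      ext x
      simp
    rw [h4]
    exact h3
  rw [setIntegral_congr_set hset]
  have hF : IsAddFundamentalDomain (stdL ι) (ZSpan.fundamentalDomain (Pi.basisFun ℝ ι)) volume :=
    ZSpan.isAddFundamentalDomain (Pi.basisFun ℝ ι) volume
  have : MeasurableVAdd (stdL ι) (ι → ℝ) :=
    (inferInstance : MeasurableVAdd (stdL ι).toAddSubgroup (ι → ℝ))
  have : VAddInvariantMeasure (stdL ι) (ι → ℝ) volume :=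
    (inferInstance : VAddInvariantMeasure (stdL ι).toAddSubgroup (ι → ℝ) volume)
  rw [hF.integral_eq_tsum'' G hG, ← integral_tsum]
  · congr 1
    ext x
    rw [← (stdLEquiv ι).tsum_eq]
    congr 1
    ext n
    rw [Submodule.vadd_def, stdLEquiv_coe, vadd_eq_add, add_comm]
  · exact fun i ↦ (hG.1.comp_quasiMeasurePreserving
      (measurePreserving_vadd i volume).quasiMeasurePreserving).restrict
  · rw [← hF.lintegral_eq_tsum'' (‖G ·‖ₑ)]
    exact ne_of_lt hG.2

lemma integrable_mul_e {V : Type*} [MeasurableSpace V] [TopologicalSpace V] [BorelSpace V]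
    {μ : Measure V} {h : V → ℂ} (hh : Integrable h μ) {g : V → ℝ} (hg : Continuous g) :
    Integrable (fun v => h v * e (g v)) μ := by
  have hn : ∀ t, ‖e t‖ = 1 := by
    intro t
    rw [e, Complex.norm_exp]
    simp
  refine hh.mul_bdd (c := 1) ?_ (Filter.Eventually.of_forall fun v => (hn _).le)
  apply Measurable.aestronglyMeasurable
  have : Continuous e := by unfold e; fun_prop
  exact (this.comp hg).measurable

lemma mFourier_coe {ι : Type*} [Fintype ι] (n : ι → ℤ) (x : ι → ℝ) :
    UnitAddTorus.mFourier n (fun i => (x i : UnitAddCircle)) = e (∑ i, (n i : ℝ) * x i) := by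
  simp only [UnitAddTorus.mFourier, ContinuousMap.coe_mk, fourier_coe_apply, e]
  rw [← Complex.exp_sum]
  congr 1
  push_cast
  rw [Finset.mul_sum]
  refine Finset.sum_congr rfl fun i _ => ?_
  simp
  ring

lemma e_add_int (t : ℝ) (m : ℤ) : e (t + m) = e t := by
  unfold e
  rw [Complex.exp_eq_exp_iff_exists_int]
  exact ⟨m, by push_cast; ring⟩

theorem poisson_std {ι : Type*} [Fintype ι] (h : SchwartzMap (ι → ℝ) ℂ)
    (hs : Summable fun n : ι → ℤ => ∫ v, h v * e (-∑ i, (n i : ℝ) * v i)) (x : ι → ℝ) :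
    ∑' n : ι → ℤ, h (x + icst n) =
      ∑' n : ι → ℤ, e (∑ i, (n i : ℝ) * x i) * ∫ v, h v * e (-∑ i, (n i : ℝ) * v i) := by
  set H : (ι → ℝ) → ℂ := fun x => ∑' n : ι → ℤ, h (x + icst n) with hH
  have hHc : Continuous H := periodization_continuous h
  have hHp : ∀ (x : ι → ℝ) (m : ι → ℤ), H (x + icst m) = H x := by
    intro x m
    simp only [hH]
    rw [← (Equiv.addLeft m).tsum_eq (fun n => h (x + icst n))]
    congr 1
    ext n
    congr 1
    ext i
    simp [icst]
    ring
  let π : (ι → ℝ) → UnitAddTorus ι := fun x i => (x i : UnitAddCircle)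
  have hπ : IsOpenQuotientMap π := by
    have := IsOpenQuotientMap.piMap (f := fun (_ : ι) (t : ℝ) => (t : UnitAddCircle))
      (fun _ => QuotientAddGroup.isOpenQuotientMap_mk)
    exact this
  let F : UnitAddTorus ι → ℂ := fun t => H (Function.surjInv hπ.surjective t)
  have hF : ∀ x, F (π x) = H x := by
    intro x
    have h1 : π (Function.surjInv hπ.surjective (π x)) = π x := Function.surjInv_eq _ _
    have h2 : ∀ i, ∃ m : ℤ, Function.surjInv hπ.surjective (π x) i = x i + m := by
      intro i
      have := congrFun h1 i
      simp only [π] at this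
      rw [eq_comm] at this
      obtain ⟨m, hm⟩ := AddSubgroup.mem_zmultiples_iff.mp (QuotientAddGroup.eq.mp this)
      refine ⟨m, ?_⟩
      simp only [zsmul_eq_mul, mul_one] at hm
      simp only [π]
      linarith
    choose m hm using h2
    have : Function.surjInv hπ.surjective (π x) = x + icst m := funext hm
    simp only [F]
    rw [this, hHp]
  have hFc : Continuous F := by
    rw [hπ.isQuotientMap.continuous_iff]
    convert hHc using 1
    exact funext hF
  have hcoef : ∀ n : ι → ℤ, UnitAddTorus.mFourierCoeff F n = ∫ v, h v * e (-∑ i, (n i : ℝ) * v i) := by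
    intro n
    rw [UnitAddTorus.mFourierCoeff_eq_integral F n 0, ← unfold_integral]
    · congr 1
      ext x
      have := hF x
      simp only [π] at this
      rw [this, mFourier_coe, smul_eq_mul, hH]
      beta_reduce
      rw [← tsum_mul_left]
      congr 1
      ext m
      rw [mul_comm]
      congr 1
      rw [← e_add_int _ (-∑ i, n i * m i)]
      congr 1
      simp [icst, mul_add, Finset.sum_add_distrib]
      ring
    · exact integrable_mul_e (h.integrable) (by fun_prop)
  have := UnitAddTorus.hasSum_mFourier_series_apply_of_summable (f := ⟨F, hFc⟩)
    (by convert hs using 1; exact funext hcoef) (π x)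
  simp only [ContinuousMap.coe_mk, hF, hcoef, π, mFourier_coe, smul_eq_mul] at this
  change H x = _
  rw [← this.tsum_eq]
  congr 1
  ext n
  rw [mul_comm]

/-- **Poisson summation for shifted lattices** (Proposition 3/4 of the paper).
Let `f : ℝ^d → ℂ` be a smooth function of rapid decay (a Schwartz function), `Λ` a full-rank
lattice in `ℝ^d`, `B > 0` and `a ∈ ℝ^d`. Then
`∑_{y ∈ a + Λ} f(y/B) = (B^d / Vol(ℝ^d/Λ)) ∑_{x ∈ Λ'} e(a·x) f̂(Bx)`,
where `Λ' = {x : x·y ∈ ℤ for all y ∈ Λ}` is the dual lattice and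
`f̂(x) = ∫ f(y) e(-x·y) dy`. -/
theorem poisson_summation_shifted_lattice
    (d : ℕ) (Λ : Submodule ℤ (EuclideanSpace ℝ (Fin d)))
    [DiscreteTopology Λ] [IsZLattice ℝ Λ]
    (f : SchwartzMap (EuclideanSpace ℝ (Fin d)) ℂ)
    (B : ℝ) (hB : 0 < B) (a : EuclideanSpace ℝ (Fin d)) :
    ∑' y : {y : EuclideanSpace ℝ (Fin d) // y - a ∈ Λ}, f (B⁻¹ • (y : EuclideanSpace ℝ (Fin d)))
      = ((B ^ d / ZLattice.covolume Λ volume : ℝ) : ℂ) *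
        ∑' x : {x : EuclideanSpace ℝ (Fin d) //
            ∀ y ∈ Λ, ∃ m : ℤ, ⟪(x : EuclideanSpace ℝ (Fin d)), y⟫ = (m : ℝ)},
          e ⟪a, (x : EuclideanSpace ℝ (Fin d))⟫ *
            ∫ y : EuclideanSpace ℝ (Fin d),
              f y * e (-⟪B • (x : EuclideanSpace ℝ (Fin d)), y⟫) := by
  classical
  set ι := Module.Free.ChooseBasisIndex ℤ Λ
  let b := Module.Free.chooseBasis ℤ Λ
  let bR : Module.Basis ι ℝ (EuclideanSpace ℝ (Fin d)) := b.ofZLatticeBasis ℝ Λ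
  have hbR : ∀ i, bR i = (b i : EuclideanSpace ℝ (Fin d)) := fun i => b.ofZLatticeBasis_apply ℝ Λ i
  let T : (ι → ℝ) ≃L[ℝ] EuclideanSpace ℝ (Fin d) := bR.equivFun.symm.toContinuousLinearEquiv
  have hT : ∀ v, T v = ∑ i, v i • bR i := fun v => bR.equivFun_symm_apply v
  -- dual coordinates
  let P0 : EuclideanSpace ℝ (Fin d) →ₗ[ℝ] (ι → ℝ) :=
    LinearMap.pi fun i => (innerₗ (EuclideanSpace ℝ (Fin d))).flip (bR i)
  have hP0 : ∀ x i, P0 x i = ⟪x, bR i⟫ := fun x i => rfl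
  have hinj : Function.Injective P0 := by
    rw [← LinearMap.ker_eq_bot, LinearMap.ker_eq_bot']
    intro x hx
    refine InnerProductSpace.ext_inner_right_basis bR fun i => ?_
    rw [← hP0, hx]
    simp
  let P : EuclideanSpace ℝ (Fin d) ≃L[ℝ] (ι → ℝ) :=
    (LinearEquiv.ofInjectiveOfFinrankEq P0 hinj
      bR.equivFun.finrank_eq).toContinuousLinearEquiv
  have hP : ∀ x i, P x i = ⟪x, bR i⟫ := fun x i => rfl
  have hPT : ∀ x v, ⟪x, T v⟫ = ∑ i, P x i * v i := by
    intro x v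
    rw [hT, inner_sum]
    refine Finset.sum_congr rfl fun i _ => ?_
    rw [inner_smul_right, hP, mul_comm]
  -- index equivalences
  have hTmem : ∀ n : ι → ℤ, T (icst n) ∈ Λ := by
    intro n
    rw [hT]
    refine Submodule.sum_mem _ fun i _ => ?_
    rw [hbR, icst, Int.cast_smul_eq_zsmul]
    exact Λ.smul_mem _ (b i).2
  have hmemT : ∀ y ∈ Λ, ∃ n : ι → ℤ, T (icst n) = y := by
    intro y hy
    refine ⟨fun i => b.repr ⟨y, hy⟩ i, ?_⟩
    apply bR.equivFun.injective
    change bR.equivFun (bR.equivFun.symm _) = _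
    rw [LinearEquiv.apply_symm_apply]
    ext i
    have := b.ofZLatticeBasis_repr_apply ℝ Λ ⟨y, hy⟩ i
    simp only [icst, Module.Basis.equivFun_apply]
    exact this.symm
  have hicst : Function.Injective (icst : (ι → ℤ) → ι → ℝ) := by
    intro m n h
    ext i
    have := congrFun h i
    simpa [icst] using this
  let e1 : (ι → ℤ) ≃ {y : EuclideanSpace ℝ (Fin d) // y - a ∈ Λ} :=
    Equiv.ofBijective (fun n => ⟨a + T (icst n), by simpa using hTmem n⟩) (by
      constructor
      · intro m n h
        simp only [Subtype.mk.injEq, add_right_inj] at h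
        exact hicst (T.injective h)
      · rintro ⟨y, hy⟩
        obtain ⟨n, hn⟩ := hmemT _ hy
        exact ⟨n, by simp [hn]⟩)
  let e2 : (ι → ℤ) ≃ {x : EuclideanSpace ℝ (Fin d) //
            ∀ y ∈ Λ, ∃ m : ℤ, ⟪(x : EuclideanSpace ℝ (Fin d)), y⟫ = (m : ℝ)} :=
    Equiv.ofBijective (fun n => ⟨P.symm (icst n), by
      intro y hy
      obtain ⟨m, rfl⟩ := hmemT y hy
      refine ⟨∑ i, n i * m i, ?_⟩
      rw [hPT]
      simp [icst]⟩) (by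
      constructor
      · intro m n h
        simp only [Subtype.mk.injEq] at h
        exact hicst (P.symm.injective h)
      · rintro ⟨x, hx⟩
        have : ∀ i, ∃ m : ℤ, ⟪x, bR i⟫ = (m : ℝ) := fun i => hx _ (by rw [hbR]; exact (b i).2)
        choose m hm using this
        refine ⟨m, ?_⟩
        simp only [Subtype.mk.injEq]
        rw [ContinuousLinearEquiv.symm_apply_eq]
        ext i
        rw [hP, hm, icst])
  have he1 : ∀ n, ((e1 n : {y // y - a ∈ Λ}) : EuclideanSpace ℝ (Fin d)) = a + T (icst n) :=
    fun n => rfl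
  have he2 : ∀ n, ((e2 n).1 : EuclideanSpace ℝ (Fin d)) = P.symm (icst n) :=
    fun n => rfl
  -- measure
  have hcov := ZLattice.covolume_pos Λ volume
  have hmap : Measure.map T volume =
      (ENNReal.ofReal (ZLattice.covolume Λ volume))⁻¹ • (volume : Measure (EuclideanSpace ℝ (Fin d))) := by
    ext s hs
    rw [Measure.map_apply T.continuous.measurable hs]
    have h1 := ZLattice.volume_image_eq_volume_div_covolume' Λ b hs.nullMeasurableSet
    have h2 : (b.ofZLatticeBasis ℝ).equivFun '' s = T ⁻¹' s :=
      LinearEquiv.image_eq_preimage_symm (b.ofZLatticeBasis ℝ).equivFun s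
    rw [← h2, h1, ENNReal.div_eq_inv_mul]
    rfl
  have hint : ∀ g : EuclideanSpace ℝ (Fin d) → ℂ, ∫ v, g (T v) =
      ((ZLattice.covolume Λ volume)⁻¹ : ℝ) * ∫ y, g y := by
    intro g
    have h1 : ∫ y, g y ∂(Measure.map T volume) = ∫ v, g (T v) :=
      integral_map_equiv T.toHomeomorph.toMeasurableEquiv g
    rw [← h1, hmap, integral_smul_measure, ENNReal.toReal_inv, ENNReal.toReal_ofReal hcov.le]
    simp
  -- the functions
  let sB : EuclideanSpace ℝ (Fin d) ≃L[ℝ] EuclideanSpace ℝ (Fin d) :=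
    ContinuousLinearEquiv.smulLeft (Units.mk0 B⁻¹ (inv_ne_zero hB.ne'))
  have hsB : ∀ x, sB x = B⁻¹ • x := fun x => rfl
  let h : SchwartzMap (ι → ℝ) ℂ := SchwartzMap.compCLMOfContinuousLinearEquiv ℂ (T.trans sB) f
  have hh : ∀ v, h v = f (B⁻¹ • T v) := fun v => rfl
  have hhat : ∀ n : ι → ℤ, ∫ v, h v * e (-∑ i, (n i : ℝ) * v i) =
      ((B ^ d / ZLattice.covolume Λ volume : ℝ) : ℂ) *
        ∫ y, f y * e (-⟪B • P.symm (icst n), y⟫) := by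
    intro n
    have h1 : ∀ v, h v * e (-∑ i, (n i : ℝ) * v i) =
        (fun y => f y * e (-⟪B • P.symm (icst n), y⟫)) (B⁻¹ • T v) := by
      intro v
      beta_reduce
      rw [hh, inner_smul_left, inner_smul_right, hPT, ContinuousLinearEquiv.apply_symm_apply]
      congr 3
      simp [icst, hB.ne']
    simp_rw [h1]
    rw [hint (fun y => (fun y => f y * e (-⟪B • P.symm (icst n), y⟫)) (B⁻¹ • y)),
      Measure.integral_comp_inv_smul volume (fun y => f y * e (-⟪B • P.symm (icst n), y⟫)) B]
    simp [abs_of_pos hB]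
    ring
  have hF : ∀ w : EuclideanSpace ℝ (Fin d), (∫ y, f y * e (-⟪w, y⟫)) = (FourierTransform.fourier f) w := by
    intro w
    rw [SchwartzMap.fourier_coe, Real.fourier_eq']
    congr 1
    ext y
    rw [smul_eq_mul, mul_comm, e, real_inner_comm]
    congr 2
    push_cast
    ring
  have hsum : Summable fun n : ι → ℤ => ∫ v, h v * e (-∑ i, (n i : ℝ) * v i) := by
    simp_rw [hhat, hF]
    apply Summable.mul_left
    let sB' : EuclideanSpace ℝ (Fin d) ≃L[ℝ] EuclideanSpace ℝ (Fin d) :=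
      ContinuousLinearEquiv.smulLeft (Units.mk0 B hB.ne')
    let k : SchwartzMap (ι → ℝ) ℂ := SchwartzMap.compCLMOfContinuousLinearEquiv ℂ
      (P.symm.trans sB') (FourierTransform.fourier f)
    obtain ⟨u, hu, hb⟩ := schwartz_summable_aux k 0 le_rfl
    refine Summable.of_norm_bounded hu fun n => ?_
    have := hb n 0 (by simp)
    rw [zero_add] at this
    exact this
  have key := poisson_std h hsum (T.symm a)
  rw [← e1.tsum_eq, ← e2.tsum_eq, ← tsum_mul_left]
  convert key using 1
  · congr 1
    ext n
    rw [he1, hh, map_add, ContinuousLinearEquiv.apply_symm_apply]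
  · congr 1
    ext n
    rw [hhat, he2, ← mul_assoc, ← mul_assoc, mul_comm (e _)]
    congr 3
    rw [real_inner_comm]
    conv_lhs => rw [← T.apply_symm_apply a]
    rw [hPT, ContinuousLinearEquiv.apply_symm_apply]
    rfl
end
end

section
/- Let q1 ∈ ℤ[i] \ {0}, let r1, q2 ∈ ℤ[i], and let Q, N > 0 be real numbers. Then ∑_{b∈ℤ[i], b ≡ r1 q2 (mod q1)} exp(−π N(b) N/(2Q·N(q1))) = (2Q/N) · ∑_{j∈ℤ[i]} e(Re(j r1 q2 / q1)) · exp(−2π Q·N(j)/N). -/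
noncomputable section

open Complex in
lemma pg_summ_right (t : ℝ) (ht : 0 < t) (u : ℝ) :
    Summable (fun n : ℤ => cexp (-Real.pi * t * n ^ 2 + 2 * Real.pi * (-I * u) * n)) := by
  have h := (summable_jacobiTheta₂_term_iff (-u : ℂ) (I * t)).mpr (by simpa using ht)
  refine h.congr fun n => ?_
  rw [jacobiTheta₂_term]
  congr 1
  linear_combination (Real.pi * (n:ℂ) ^ 2 * t) * I_sq

open Complex in
lemma pg_summ_left (t : ℝ) (ht : 0 < t) (u : ℝ) :
    Summable (fun n : ℤ => cexp (-Real.pi * t * (n + u) ^ 2)) := by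
  have h := (summable_jacobiTheta₂_term_iff (I * t * u : ℂ) (I * t)).mpr (by simpa using ht)
  refine (h.mul_left (cexp (-Real.pi * t * u ^ 2))).congr fun n => ?_
  rw [jacobiTheta₂_term, ← Complex.exp_add]
  congr 1
  linear_combination (Real.pi * (n:ℂ) ^ 2 * t + 2 * Real.pi * n * t * u) * I_sq

open Complex in
lemma pg_one (t : ℝ) (ht : 0 < t) (u : ℝ) :
    (∑' n : ℤ, cexp (-Real.pi * t⁻¹ * (n + u) ^ 2)) =
      (t : ℂ) ^ (1 / 2 : ℂ) *
        ∑' n : ℤ, cexp (-Real.pi * t * n ^ 2 + 2 * Real.pi * (-I * u) * n) := by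
  have h := Complex.tsum_exp_neg_quadratic (a := (t : ℂ)) (by simpa using ht) (-I * u)
  have h0 : (t : ℂ) ^ (1 / 2 : ℂ) ≠ 0 := by
    rw [Ne, Complex.cpow_eq_zero_iff]
    simp [ht.ne']
  rw [h, ← mul_assoc, mul_one_div_cancel h0, one_mul]
  refine tsum_congr fun n => ?_
  have : I * (-I * u) = (u : ℂ) := by linear_combination (-u : ℂ) * I_sq
  rw [this, div_eq_mul_inv, ofReal_inv]

open Complex in
lemma pg_one' (t : ℝ) (ht : 0 < t) (u : ℝ) :
    (∑' n : ℤ, cexp (-Real.pi * t⁻¹ * (n + u) ^ 2)) =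
      (t : ℂ) ^ (1 / 2 : ℂ) *
        ∑' n : ℤ, cexp (-Real.pi * t * n ^ 2 + 2 * Real.pi * (-I * (-u : ℝ)) * n) := by
  rw [pg_one t ht u, ← (Equiv.neg ℤ).tsum_eq]
  congr 1
  refine tsum_congr fun n => ?_
  congr 1
  simp

open Complex in
lemma pg_two (t : ℝ) (ht : 0 < t) (u v : ℝ) :
    (∑' p : ℤ × ℤ, cexp (-Real.pi * t⁻¹ * (p.1 + u) ^ 2) * cexp (-Real.pi * t⁻¹ * (p.2 + v) ^ 2)) =
      (t : ℂ) * ∑' p : ℤ × ℤ,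
        cexp (-Real.pi * t * p.1 ^ 2 + 2 * Real.pi * (-I * (-u : ℝ)) * p.1) *
        cexp (-Real.pi * t * p.2 ^ 2 + 2 * Real.pi * (-I * v) * p.2) := by
  have hl := fun u => by exact (pg_summ_left t⁻¹ (inv_pos.mpr ht) u).norm
  rw [← tsum_mul_tsum_of_summable_norm (hl u) (hl v),
    ← tsum_mul_tsum_of_summable_norm (pg_summ_right t ht (-u)).norm (pg_summ_right t ht v).norm,
    pg_one' t ht u, pg_one t ht v]
  have : (t : ℂ) = (t : ℂ) ^ (1 / 2 : ℂ) * (t : ℂ) ^ (1 / 2 : ℂ) := by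
    rw [← Complex.cpow_add _ _ (by simpa using ht.ne')]
    norm_num
  rw [mul_mul_mul_comm, ← this]

/-- Pairs of integers as Gaussian integers. -/
def pgEquiv : ℤ × ℤ ≃ GaussianInt where
  toFun p := ⟨p.1, p.2⟩
  invFun z := (z.re, z.im)
  left_inv _ := rfl
  right_inv _ := rfl

/-- Parametrization of a residue class. -/
def pgClass (q s : GaussianInt) (hq : q ≠ 0) :
    GaussianInt ≃ {b : GaussianInt // q ∣ b - s} :=
  Equiv.ofBijective (fun c => ⟨s + q * c, by simp⟩) (by
    constructor
    · intro a b h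
      simpa [hq] using h
    · rintro ⟨b, c, hc⟩
      exact ⟨c, by ext1; simp [← hc]⟩)

lemma pg_gN (z : GaussianInt) : gN z = Complex.normSq (z : ℂ) := by
  simp [gN, Complex.normSq_apply, sq]

/-- **Poisson summation for the Gaussian weight over a residue class** (identity (15) of
the paper). For `q₁ ≠ 0`, `r₁, q₂ ∈ ℤ[i]` and `Q, N > 0`,
`∑_{b ≡ r₁q₂ (mod q₁)} exp(-π N(b) N/(2Q N(q₁)))
  = (2Q/N) ∑_{j ∈ ℤ[i]} e(Re(j r₁ q₂/q₁)) exp(-2π Q N(j)/N)`. -/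
theorem poisson_gaussian_residue_class
    (q1 : GaussianInt) (hq1 : q1 ≠ 0) (r1 q2 : GaussianInt)
    (Q N : ℝ) (hQ : 0 < Q) (hN : 0 < N) :
    ((∑' b : {b : GaussianInt // q1 ∣ b - r1 * q2},
        Real.exp (-Real.pi * gN (b : GaussianInt) * N / (2 * Q * gN q1)) : ℝ) : ℂ)
      = ((2 * Q / N : ℝ) : ℂ) *
        ∑' j : GaussianInt,
          e ((((j : ℂ) * (r1 : ℂ) * (q2 : ℂ)) / (q1 : ℂ)).re) *
            ((Real.exp (-(2 * Real.pi) * Q * gN j / N) : ℝ) : ℂ) := by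
  have hq : (q1 : ℂ) ≠ 0 := by simpa using hq1
  set w : ℂ := (r1 : ℂ) * q2 / q1 with hw
  have ht : 0 < 2 * Q / N := by positivity
  have key := pg_two (2 * Q / N) ht w.re w.im
  rw [Complex.ofReal_tsum, ← (pgClass q1 (r1 * q2) hq1).tsum_eq, ← pgEquiv.tsum_eq,
    ← pgEquiv.tsum_eq (fun j : GaussianInt => e ((((j : ℂ) * (r1 : ℂ) * (q2 : ℂ)) / (q1 : ℂ)).re) *
            ((Real.exp (-(2 * Real.pi) * Q * gN j / N) : ℝ) : ℂ))]
  convert key using 1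
  · refine tsum_congr fun p => ?_
    have h1 : gN ((pgClass q1 (r1 * q2) hq1 (pgEquiv p)) : GaussianInt)
        = gN q1 * ((p.1 + w.re) ^ 2 + (p.2 + w.im) ^ 2) := by
      have : (((pgClass q1 (r1 * q2) hq1 (pgEquiv p)) : GaussianInt) : ℂ)
          = q1 * ((pgEquiv p : GaussianInt) + w) := by
        change GaussianInt.toComplex (r1 * q2 + q1 * pgEquiv p) = _
        simp only [map_add, map_mul, hw]
        field_simp
        ring
      rw [pg_gN, pg_gN, this, map_mul]
      congr 1
      simp [Complex.normSq_apply, pgEquiv, GaussianInt.toComplex_def₂, sq]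
    have h2 : gN q1 ≠ 0 := by rw [pg_gN]; simpa using hq1
    have h3 : -Real.pi * gN ((pgClass q1 (r1 * q2) hq1 (pgEquiv p)) : GaussianInt) * N
        / (2 * Q * gN q1) = -Real.pi * (2 * Q / N)⁻¹ * (p.1 + w.re) ^ 2 +
          -Real.pi * (2 * Q / N)⁻¹ * (p.2 + w.im) ^ 2 := by
      rw [h1]; field_simp; ring
    rw [h3, Complex.ofReal_exp, ← Complex.exp_add]
    push_cast
    rfl
  · congr 1
    refine tsum_congr fun p => ?_
    have h1 : ((((pgEquiv p : GaussianInt) : ℂ) * (r1 : ℂ) * (q2 : ℂ)) / (q1 : ℂ)).re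
        = p.1 * w.re - p.2 * w.im := by
      rw [mul_assoc, mul_div_assoc, ← hw, Complex.mul_re]
      simp [pgEquiv, GaussianInt.toComplex_def₂]
    rw [h1, e, Complex.ofReal_exp, ← Complex.exp_add, ← Complex.exp_add]
    congr 1
    simp only [gN, pgEquiv, Equiv.coe_fn_mk]
    push_cast
    ring
end
end
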